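/- arXiv:0905.1858 — 3 statements merged into one kernel-verified Lean document; each statement's English description precedes it below -/
import Mathlib

section
/- Let M ⊂ ℝ^m be compact, F a bounded standard set-valued map, T > 0 and C > 0, and let K_C be the set of Lipschitz paths y : [0,T] → ℝ^m with Lipschitz constant at most ‖F‖ + C + 1 and y(0) ∈ M, where ‖F‖ = sup_{x∈Φ^T(M)} sup_{y∈F(x)} ‖y‖ and Φ^T(M) = closure(⋃_{s∈[0,T]} Φ_s(M)). Then for every α > 0 there exist ε > 0 and δ₀ > 0 such that for every δ < δ₀ and every z ∈ K_C: if d_{[0,T]}(z, Λ^δ(z)) < ε then d_{[0,T]}(z, S_{[0,T]}) < α, where S_{[0,T]} is the set of restrictions to [0,T] of solutions of dx/dt ∈ F(x) starting in M, and d_{[0,T]} is the distance induced by the uniform norm on [0,T]. -/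
open MeasureTheory Filter Topology Metric Set Pointwise

noncomputable section

/-- `ℝ^m` with the Euclidean norm. -/
abbrev Euc (m : ℕ) := EuclideanSpace ℝ (Fin m)

/-- A standard set-valued map `F : ℝ^m ⇒ ℝ^m`: nonempty compact convex values,
closed graph, and linear growth. -/
def IsStandardSVM {m : ℕ} (F : Euc m → Set (Euc m)) : Prop :=
  (∀ x, (F x).Nonempty ∧ IsCompact (F x) ∧ Convex ℝ (F x)) ∧
  IsClosed {p : Euc m × Euc m | p.2 ∈ F p.1} ∧
  ∃ c > 0, ∀ x, ∀ z ∈ F x, ‖z‖ ≤ c * (1 + ‖x‖)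

/-- A solution of the differential inclusion `dx/dt ∈ F x`: an absolutely continuous
curve `z : ℝ → ℝ^m` (written as the integral of a locally integrable derivative `h`)
with `h t ∈ F (z t)` for almost every `t`. -/
def IsSolution {m : ℕ} (F : Euc m → Set (Euc m)) (z : ℝ → Euc m) : Prop :=
  Continuous z ∧ ∃ h : ℝ → Euc m,
    (∀ a b : ℝ, IntervalIntegrable h volume a b) ∧
    (∀ᵐ t ∂volume, h t ∈ F (z t)) ∧
    ∀ t : ℝ, z t = z 0 + ∫ u in (0:ℝ)..t, h u

/-- `Φ_t(x)`: the set of points reached at time `t` by solutions starting at `x`. -/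
def PhiT {m : ℕ} (F : Euc m → Set (Euc m)) (t : ℝ) (x : Euc m) : Set (Euc m) :=
  {y | ∃ z : ℝ → Euc m, IsSolution F z ∧ z 0 = x ∧ z t = y}

/-- `ω_Φ(x) = ⋂_{t ≥ 0} closure (Φ_{[t,∞)}(x))`. -/
def omegaLimitSV {m : ℕ} (F : Euc m → Set (Euc m)) (x : Euc m) : Set (Euc m) :=
  ⋂ t ∈ Ici (0:ℝ), closure {y | ∃ s ≥ t, y ∈ PhiT F s x}

/-- An attractor for the set-valued dynamical system induced by `F`: a nonempty,
compact, invariant set admitting a neighborhood `U` with `Φ_t(U) ⊆ N^ε(A)` for all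
`t` large enough. -/
def IsAttractorSV {m : ℕ} (F : Euc m → Set (Euc m)) (A : Set (Euc m)) : Prop :=
  A.Nonempty ∧ IsCompact A ∧
  (∀ x ∈ A, ∃ z : ℝ → Euc m, IsSolution F z ∧ z 0 = x ∧ Set.range z ⊆ A) ∧
  ∃ U : Set (Euc m), IsOpen U ∧ A ⊆ U ∧
    ∀ ε > 0, ∃ tε > 0, ∀ t ≥ tε, ∀ x ∈ U, PhiT F t x ⊆ Metric.thickening ε A

/-- The basin of attraction `B(A) = {x | ω_Φ(x) ⊆ A}`. -/
def basinSV {m : ℕ} (F : Euc m → Set (Euc m)) (A : Set (Euc m)) : Set (Euc m) :=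
  {x | omegaLimitSV F x ⊆ A}

/-- The limit set `L(X) = ⋂_{t ≥ 0} closure {X s : s ≥ t}` of a path. -/
def limitSet {m : ℕ} (X : ℝ → Euc m) : Set (Euc m) :=
  ⋂ t ∈ Ici (0:ℝ), closure {y | ∃ s ≥ t, X s = y}

/-- `inf_{z ∈ S_Φ} sup_{u ∈ [0,T]} ‖z u - Y u‖`. -/
def distToSol {m : ℕ} (F : Euc m → Set (Euc m)) (Y : ℝ → Euc m) (T : ℝ) : ℝ :=
  sInf {d | ∃ z : ℝ → Euc m, IsSolution F z ∧ d = ⨆ u : Icc (0:ℝ) T, ‖z u - Y u‖}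

/-- Asymptotic pseudotrajectory of the set-valued dynamical system induced by `F`. -/
def IsAPT {m : ℕ} (F : Euc m → Set (Euc m)) (X : ℝ → Euc m) : Prop :=
  ∀ T > 0, Tendsto (fun t => distToSol F (fun u => X (t + u)) T) atTop (𝓝 0)

/-- A point `p` is attainable by the process `X`: for every `t > 0` and every
neighborhood `U` of `p`, `P(∃ s ≥ t, X s ∈ U) > 0`. -/
def Attainable {m : ℕ} {Ω : Type*} [MeasurableSpace Ω] (μ : Measure Ω)
    (X : ℝ → Ω → Euc m) (p : Euc m) : Prop :=
  ∀ t > 0, ∀ U ∈ 𝓝 p, 0 < μ {ω | ∃ s ≥ t, X s ω ∈ U}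

/-- `τ_n = γ_1 + ⋯ + γ_n`. -/
def tauOf (γ : ℕ → ℝ) (n : ℕ) : ℝ := ∑ i ∈ Finset.range n, γ (i + 1)

/-- `m(t) = sup {j | τ_j ≤ t}`. -/
def mIdx (γ : ℕ → ℝ) (t : ℝ) : ℕ := sSup {j | tauOf γ j ≤ t}

/-- Hypothesis H1: there is `w t α T` decreasing to `0` in `t` dominating the
conditional probability that `sup_{s ≥ t} inf_{z ∈ S_Φ} sup_{u ∈ [0,T]} ‖z u − X (s+u)‖ ≥ α`. -/
def HypH1 {m : ℕ} {Ω : Type*} [MeasurableSpace Ω] (μ : Measure Ω)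
    (𝓕 : ℝ → MeasurableSpace Ω) (F : Euc m → Set (Euc m)) (X : ℝ → Ω → Euc m) : Prop :=
  ∃ w : ℝ → ℝ → ℝ → ℝ,
    (∀ α > 0, ∀ T > 0, Antitone (fun t => w t α T) ∧ Tendsto (fun t => w t α T) atTop (𝓝 0)) ∧
    ∀ α > 0, ∀ T > 0, ∀ t : ℝ, ∀ᵐ ω ∂μ,
      (μ[Set.indicator {ω' | α ≤ ⨆ s : Ici t, distToSol F (fun u => X ((s : ℝ) + u) ω') T}
          (fun _ => (1:ℝ)) | 𝓕 t]) ω ≤ w t α T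

/-- `F^δ(x) = {y | ∃ z ∈ B(x,δ), dist(y, F z) < δ}`, with the convention `F^0 = F`. -/
def Fdelta {m : ℕ} (F : Euc m → Set (Euc m)) (δ : ℝ) (x : Euc m) : Set (Euc m) :=
  if δ = 0 then F x
  else {y | ∃ z : Euc m, dist z x < δ ∧ Metric.infDist y (F z) < δ}

/-- A `(δ(·), V(·))`-perturbed solution of `dx/dt ∈ F x`. -/
def IsPerturbedSolution {m : ℕ} (F : Euc m → Set (Euc m)) (δ : ℝ → ℝ) (V : ℝ → Euc m)
    (y : ℝ → Euc m) : Prop :=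
  Continuous y ∧ (∀ t > 0, 0 < δ t) ∧ Antitone δ ∧ Tendsto δ atTop (𝓝 0) ∧
  (∀ a b : ℝ, IntervalIntegrable V volume a b) ∧
  (∀ T > 0, Tendsto (fun t => ⨆ u : Icc (0:ℝ) T, ‖∫ r in t..(t + (u : ℝ)), V r‖)
    atTop (𝓝 0)) ∧
  ∃ h : ℝ → Euc m, (∀ a b : ℝ, IntervalIntegrable h volume a b) ∧
    (∀ᵐ t ∂(volume.restrict (Ioi (0:ℝ))), h t - V t ∈ Fdelta F (δ t) (y t)) ∧
    ∀ t ∈ Ici (0:ℝ), y t = y 0 + ∫ u in (0:ℝ)..t, h u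

/-- `Δ(n,T) = sup_{n < k ≤ m(τ_n + T)} ‖∑_{i=n}^{k-1} γ_{i+1} U_{i+1}‖`. -/
def DeltaNT {m : ℕ} {Ω : Type*} (γ : ℕ → ℝ) (U : ℕ → Ω → Euc m) (T : ℝ) (n : ℕ)
    (ω : Ω) : ℝ :=
  ⨆ k : {k : ℕ // n < k ∧ k ≤ mIdx γ (tauOf γ n + T)},
    ‖∑ i ∈ Finset.Ico n (k : ℕ), γ (i + 1) • U (i + 1) ω‖

/-- Condition (bruit2): the conditional probability that `sup_{m ≥ n} Δ(m,T) ≥ ε` is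
dominated by some `w n ε T` decreasing to `0` in `n`. -/
def Bruit2 {m : ℕ} {Ω : Type*} [MeasurableSpace Ω] (μ : Measure Ω)
    (𝓕 : ℕ → MeasurableSpace Ω) (γ : ℕ → ℝ) (U : ℕ → Ω → Euc m) : Prop :=
  ∃ w : ℕ → ℝ → ℝ → ℝ,
    (∀ ε > 0, ∀ T > 0, Antitone (fun n => w n ε T) ∧ Tendsto (fun n => w n ε T) atTop (𝓝 0)) ∧
    ∀ ε > 0, ∀ T > 0, ∀ n : ℕ, ∀ᵐ ω ∂μ,
      (μ[Set.indicator {ω' | ε ≤ ⨆ k : Ici n, DeltaNT γ U T (k : ℕ) ω'}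
          (fun _ => (1:ℝ)) | 𝓕 n]) ω ≤ w n ε T

/-- Topological `limsup` of a sequence of sets: points whose every neighborhood
meets infinitely many of the sets. -/
def setLimsup {X : Type*} [TopologicalSpace X] (A : ℕ → Set X) : Set X :=
  {y | ∀ U ∈ 𝓝 y, {n | (U ∩ A n).Nonempty}.Infinite}

/-- The operator `Λ^δ` on continuous paths `[0,T] → ℝ^m` (with `Λ^0 = Λ`). -/
def LambdaD {m : ℕ} (F : Euc m → Set (Euc m)) (T : ℝ) (hT : 0 ≤ T) (δ : ℝ)
    (z : C(Icc (0:ℝ) T, Euc m)) : Set C(Icc (0:ℝ) T, Euc m) :=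
  {y | ∃ h : ℝ → Euc m, IntervalIntegrable h volume 0 T ∧
    (∀ u : Icc (0:ℝ) T, h u ∈ Fdelta F δ (z u)) ∧
    ∀ τ : Icc (0:ℝ) T, y τ = z ⟨0, Set.left_mem_Icc.mpr hT⟩ + ∫ u in (0:ℝ)..(τ : ℝ), h u}

/-- `Φ^T(M) = closure (⋃_{s ∈ [0,T]} Φ_s(M))`. -/
def PhiTM {m : ℕ} (F : Euc m → Set (Euc m)) (T : ℝ) (M : Set (Euc m)) : Set (Euc m) :=
  closure (⋃ s ∈ Icc (0:ℝ) T, ⋃ x ∈ M, PhiT F s x)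

/-- `‖F‖ = sup_{x ∈ Φ^T(M)} sup_{y ∈ F x} ‖y‖`. -/
def normF {m : ℕ} (F : Euc m → Set (Euc m)) (T : ℝ) (M : Set (Euc m)) : ℝ :=
  sSup {r | ∃ x ∈ PhiTM F T M, ∃ y ∈ F x, r = ‖y‖}

/-- `K_C`: Lipschitz paths with constant `‖F‖ + C + 1` starting in `M`. -/
def KC {m : ℕ} (F : Euc m → Set (Euc m)) (T : ℝ) (hT : 0 ≤ T) (M : Set (Euc m))
    (C : ℝ) : Set C(Icc (0:ℝ) T, Euc m) :=
  {y | (∀ u v : Icc (0:ℝ) T, ‖y u - y v‖ ≤ (normF F T M + C + 1) * |(u : ℝ) - (v : ℝ)|) ∧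
    y ⟨0, Set.left_mem_Icc.mpr hT⟩ ∈ M}

/-- `S_{[0,T]}`: restrictions to `[0,T]` of solutions starting in `M`. -/
def SolRestrict {m : ℕ} (F : Euc m → Set (Euc m)) (T : ℝ) (M : Set (Euc m)) :
    Set C(Icc (0:ℝ) T, Euc m) :=
  {y | ∃ z : ℝ → Euc m, IsSolution F z ∧ z 0 ∈ M ∧ ∀ u : Icc (0:ℝ) T, y u = z u}

/-- A generalised stochastic approximation process relative to `F`. -/
def IsGSAP {m : ℕ} {Ω : Type*} [MeasurableSpace Ω] (μ : Measure Ω)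
    (F : Euc m → Set (Euc m)) (M : Set (Euc m)) (γ : ℕ → ℝ)
    (Fn : ℕ → Euc m → Set (Euc m)) (U : ℕ → Ω → Euc m) (x : ℕ → Ω → Euc m) : Prop :=
  (∀ n, 0 < γ n) ∧
  Tendsto (fun n => ∑ i ∈ Finset.range n, γ (i + 1)) atTop atTop ∧
  Tendsto γ atTop (𝓝 0) ∧
  (∃ C, ∀ n ω, ‖U n ω‖ ≤ C) ∧
  (∀ n ω, x (n + 1) ω - x n ω - γ (n + 1) • U (n + 1) ω ∈ γ (n + 1) • Fn n (x n ω)) ∧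
  (∀ T > 0, ∀ᵐ ω ∂μ, Tendsto
    (fun n => ⨆ k : {k : ℕ // ∑ i ∈ Finset.Ico n k, γ i ≤ T},
      ‖∑ i ∈ Finset.Ico n (k : ℕ), γ (i + 1) • U (i + 1) ω‖) atTop (𝓝 0)) ∧
  (∀ n ω, x n ω ∈ M) ∧
  (∀ δ > 0, ∃ n₀ : ℕ, ∀ n ≥ n₀, ∀ ω, Fn n (x n ω) ⊆ Fdelta F δ (x n ω))

/-!
If `y ∈ Λ^δ(z)` is uniformly close to `z`, its velocity lies in `F^δ(z) ⊆ F^ρ(y)` for every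
`ρ > δ + d(z, y)`, so `y` itself solves the inflated inclusion `y' ∈ F^ρ(y)`. It is therefore enough
that solutions of `w' ∈ F^ρ(w)` starting in `M` be shadowed on `[0,T]` by solutions of `x' ∈ F(x)`
when `ρ` is small. Otherwise there are unshadowed solutions `w_n` for some `ρ_n → 0`. Euler polygons
extend each `w_n` to all of `ℝ`; the extensions are equi-Lipschitz, so they converge along an
ultrafilter, uniformly on compact sets. The slopes of `w_n` are averages of velocities which, by
upper hemicontinuity, lie in small convex neighbourhoods of `F(z(t))`, so the limit `z` satisfies
`z' ∈ F(z)` wherever it is differentiable and shadows `w_n` for some `n`.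

Since `infDist` to the empty set is `0`, the argument also needs `Λ^δ(z) ≠ ∅`; this is provided by a
measurable selection of `F`.
-/

section SetValued

variable {X Y : Type*} [TopologicalSpace X]

theorem isClosed_inter_nonempty_of_isClosed_graph [TopologicalSpace Y] {F : X → Set Y}
    (hF : IsClosed {p : X × Y | p.2 ∈ F p.1}) {K : Set Y} (hK : IsCompact K) :
    IsClosed {x | (F x ∩ K).Nonempty} := by
  have : CompactSpace K := isCompact_iff_compactSpace.mp hK
  have hGraphK : IsClosed {p : X × K | (p.2 : Y) ∈ F p.1} :=
    hF.preimage (continuous_id.prodMap continuous_subtype_val)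
  convert isClosedMap_fst_of_compactSpace _ hGraphK using 1
  ext x
  simp [Set.Nonempty, and_comm]

theorem upperHemicontinuous_of_isClosed_graph [TopologicalSpace Y] {F : X → Set Y}
    (hF : IsClosed {p : X × Y | p.2 ∈ F p.1}) {K : Set Y} (hK : IsCompact K)
    (hFK : ∀ x, F x ⊆ K) : UpperHemicontinuous F := by
  refine upperHemicontinuous_iff_isClosed_compl_preimage_Iic_compl.mpr fun u hu => ?_
  convert isClosed_inter_nonempty_of_isClosed_graph hF (hK.inter_right hu) using 1
  ext x
  simp only [mem_compl_iff, mem_preimage, mem_Iic, subset_compl_iff_disjoint_right,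
    not_disjoint_iff_nonempty_inter, mem_ofPred_eq, ← inter_assoc, inter_eq_left.mpr (hFK x)]

theorem lowerSemicontinuous_infEDist_of_upperHemicontinuous [PseudoEMetricSpace Y] {F : X → Set Y}
    (hF : UpperHemicontinuous F) (y : Y) : LowerSemicontinuous fun x => infEDist y (F x) := by
  intro x r hr
  obtain ⟨r', hrr', hr'⟩ := exists_between hr
  have hopen : IsOpen {y' | r' < edist y y'} :=
    isOpen_lt continuous_const (continuous_const.edist continuous_id)
  have hsub : F x ⊆ {y' | r' < edist y y'} := fun y' hy' =>
    hr'.trans_le (infEDist_le_edist_of_mem hy')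
  filter_upwards [hF.forall_isOpen x _ hopen hsub] with x' hx'
  exact hrr'.trans_le (le_infEDist.mpr fun y' hy' => (hx' hy').le)

theorem eq_of_edist_zero_le_infEDist {E : Type*} [NormedAddCommGroup E] [NormedSpace ℝ E]
    [StrictConvexSpace ℝ E] {s : Set E} (hs : Convex ℝ s) {y y' : E} (hy : y ∈ s) (hy' : y' ∈ s)
    (hmin : edist 0 y ≤ infEDist 0 s) (hmin' : edist 0 y' ≤ infEDist 0 s) : y = y' := by
  have norm_le_of_mem : ∀ {a b : E}, edist 0 a ≤ infEDist 0 s → b ∈ s → ‖a‖ ≤ ‖b‖ :=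
    fun ha hb => by
      simpa [← NNReal.coe_le_coe] using ha.trans (infEDist_le_edist_of_mem hb)
  by_contra hne
  have hmid : (2⁻¹ : ℝ) • y + (2⁻¹ : ℝ) • y' ∈ s := hs hy hy' (by simp) (by simp) (by norm_num)
  exact (norm_combo_lt_of_ne le_rfl (norm_le_of_mem hmin' hy) hne (by simp) (by simp)
    (by norm_num)).not_ge (norm_le_of_mem hmin hmid)

theorem exists_measurable_selection_of_upperHemicontinuous [MeasurableSpace X]
    [OpensMeasurableSpace X] {E : Type*} [NormedAddCommGroup E] [NormedSpace ℝ E]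
    [StrictConvexSpace ℝ E] [MeasurableSpace E] [BorelSpace E] {F : X → Set E}
    (hF : UpperHemicontinuous F) (hne : ∀ x, (F x).Nonempty) (hcomp : ∀ x, IsCompact (F x))
    (hconv : ∀ x, Convex ℝ (F x)) : ∃ f : X → E, Measurable f ∧ ∀ x, f x ∈ F x := by
  choose f hf hmin using fun x => (hcomp x).exists_infEDist_eq_edist (hne x) 0
  refine ⟨f, measurable_of_isClosed fun K hK => ?_, hf⟩
  -- Points of minimal norm are unique, so membership of `f x` in `K` is a comparison of distances.
  have hpre : f ⁻¹' K = {x | infEDist 0 (F x ∩ K) ≤ infEDist 0 (F x)} := by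
    ext x
    refine ⟨fun hx => (infEDist_le_edist_of_mem (mem_inter (hf x) hx)).trans (hmin x).ge,
      fun hx => ?_⟩
    have hFK : (F x ∩ K).Nonempty := by
      by_contra hempty
      rw [not_nonempty_iff_eq_empty] at hempty
      simp [hempty, hmin x] at hx
    obtain ⟨y, ⟨hyF, hyK⟩, hy⟩ :=
      ((hcomp x).inter_right hK).exists_infEDist_eq_edist hFK 0
    rwa [mem_preimage, eq_of_edist_zero_le_infEDist (hconv x) (hf x) hyF (hmin x).ge (hy ▸ hx)]
  rw [hpre]
  exact measurableSet_le
    (lowerSemicontinuous_infEDist_of_upperHemicontinuous (hF.inter hK) 0).measurable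
    (lowerSemicontinuous_infEDist_of_upperHemicontinuous hF 0).measurable

end SetValued

section EquiLipschitz

open scoped NNReal

variable {X Y ι : Type*} [PseudoMetricSpace X] [PseudoMetricSpace Y] {w : ι → X → Y} {L : ℝ≥0}

theorem exists_tendsto_ultrafilter_of_lipschitzWith [ProperSpace Y]
    (hw : ∀ i, LipschitzWith L (w i)) {M : Set Y} (hM : Bornology.IsBounded M) {x₀ : X}
    (hx₀ : ∀ i, w i x₀ ∈ M) (U : Ultrafilter ι) : ∃ z, Tendsto w U (𝓝 z) := by
  have hcomp : IsCompact (univ.pi fun x => cthickening (L * dist x x₀) M) :=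
    isCompact_univ_pi fun x => isCompact_of_isClosed_isBounded isClosed_cthickening hM.cthickening
  have hmem : ∀ i, w i ∈ univ.pi fun x => cthickening (L * dist x x₀) M := fun i x _ =>
    mem_cthickening_of_dist_le _ _ _ _ (hx₀ i) ((hw i).dist_le_mul x x₀)
  obtain ⟨z, -, hz⟩ := hcomp.ultrafilter_le_nhds (U.map w)
    (le_principal_iff.mpr (mem_map.mpr (Eventually.of_forall hmem)))
  exact ⟨z, hz⟩

theorem tendsto_prod_nhds_of_tendsto_of_lipschitzWith (hw : ∀ i, LipschitzWith L (w i))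
    {l : Filter ι} {z : X → Y} (hz : Tendsto w l (𝓝 z)) (x : X) :
    Tendsto (fun p : ι × X => w p.1 p.2) (l ×ˢ 𝓝 x) (𝓝 (z x)) := by
  have hnear : Tendsto (fun p : ι × X => L * dist p.2 x) (l ×ˢ 𝓝 x) (𝓝 0) := by
    simpa using ((tendsto_iff_dist_tendsto_zero.mp tendsto_snd).const_mul (L : ℝ))
  have hpointwise : Tendsto (fun p : ι × X => dist (w p.1 x) (z x)) (l ×ˢ 𝓝 x) (𝓝 0) :=
    (tendsto_iff_dist_tendsto_zero.mp (tendsto_pi_nhds.mp hz x)).comp tendsto_fst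
  refine tendsto_iff_dist_tendsto_zero.mpr (squeeze_zero (fun _ => dist_nonneg) (fun p => ?_)
    (by simpa using hnear.add hpointwise))
  exact (dist_triangle _ (w p.1 x) _).trans (add_le_add_left ((hw p.1).dist_le_mul _ _) _)

theorem tendstoUniformlyOn_of_tendsto_of_lipschitzWith (hw : ∀ i, LipschitzWith L (w i))
    {l : Filter ι} {z : X → Y} (hz : Tendsto w l (𝓝 z)) {K : Set X} (hK : IsCompact K) :
    TendstoUniformlyOn w z l K := by
  have hequi : EquicontinuousOn w K :=
    (LipschitzWith.uniformEquicontinuous w L hw).equicontinuous.equicontinuousOn K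
  have hlim := (EquicontinuousOn.tendsto_uniformOnFun_iff_pi' (𝔖 := {K}) (by simpa) (by simpa)
    l z).mpr (tendsto_pi_nhds.mpr fun x => tendsto_pi_nhds.mp hz x)
  exact UniformOnFun.tendsto_iff_tendstoUniformlyOn.mp hlim K rfl

end EquiLipschitz

section Primitive

open scoped NNReal

variable {E : Type*} [NormedAddCommGroup E] [NormedSpace ℝ E]

/-- `w` is a primitive of `h` on `s`: the increments of `w` between points of `s` are the Lebesgue
integrals of `h`. It is meant for order-connected `s`, where it says that `w` is absolutely
continuous with derivative `h`. -/
def IsPrimitiveOn (h w : ℝ → E) (s : Set ℝ) : Prop :=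
  ∀ a ∈ s, ∀ b ∈ s, IntervalIntegrable h volume a b ∧ ∫ t in a..b, h t = w b - w a

namespace IsPrimitiveOn

variable {h w : ℝ → E} {s : Set ℝ}

theorem of_base (c : ℝ)
    (hc : ∀ t ∈ s, IntervalIntegrable h volume c t ∧ ∫ u in c..t, h u = w t - w c) :
    IsPrimitiveOn h w s := fun a ha b hb =>
  ⟨(hc a ha).1.symm.trans (hc b hb).1, by
    rw [← intervalIntegral.integral_interval_sub_left (hc b hb).1 (hc a ha).1, (hc a ha).2,
      (hc b hb).2, sub_sub_sub_cancel_right]⟩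

theorem const_add_integral (hint : ∀ a b, IntervalIntegrable h volume a b) (x₀ : E) :
    IsPrimitiveOn h (fun t => x₀ + ∫ u in (0 : ℝ)..t, h u) univ :=
  of_base 0 fun t _ => ⟨hint 0 t, by simp⟩

theorem comp_sub_right (hw : IsPrimitiveOn h w s) (c : ℝ) :
    IsPrimitiveOn (fun t => h (t - c)) (fun t => w (t - c)) ((· - c) ⁻¹' s) := fun a ha b hb =>
  ⟨by simpa using (hw _ ha _ hb).1.comp_sub_right c, by
    rw [intervalIntegral.integral_comp_sub_right, (hw _ ha _ hb).2]⟩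

theorem comp_neg (hw : IsPrimitiveOn h w s) :
    IsPrimitiveOn (fun t => -h (-t)) (fun t => w (-t)) (-s) := fun a ha b hb =>
  ⟨IntervalIntegrable.neg <| by
    simpa using (IntervalIntegrable.iff_comp_neg (by simp)).mp (hw _ ha _ hb).1, by
    rw [intervalIntegral.integral_neg, intervalIntegral.integral_comp_neg, (hw _ hb _ ha).2,
      neg_sub]⟩

theorem piecewise_Iic {h' w' : ℝ → E} {s' : Set ℝ} {c : ℝ} (hw : IsPrimitiveOn h w s)
    (hw' : IsPrimitiveOn h' w' s') (hs : IsGreatest s c) (hs' : IsLeast s' c)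
    (hc : w c = w' c) :
    IsPrimitiveOn ((Iic c).piecewise h h') ((Iic c).piecewise w w') (s ∪ s') := by
  refine of_base c fun t ht => ?_
  rcases ht with ht | ht
  · have htc : t ≤ c := hs.2 ht
    have heq : (uIoo c t).EqOn h ((Iic c).piecewise h h') := fun u hu => by
      rw [uIoo_of_ge htc] at hu
      exact (piecewise_eq_of_mem _ _ _ (mem_Iic.mpr hu.2.le)).symm
    obtain ⟨hint, hval⟩ := hw c hs.1 t ht
    refine ⟨hint.congr_uIoo heq, ?_⟩
    rw [← intervalIntegral.integral_congr_uIoo heq, hval,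
      piecewise_eq_of_mem _ _ _ (mem_Iic.mpr htc), piecewise_eq_of_mem _ _ _ self_mem_Iic]
  · have hct : c ≤ t := hs'.2 ht
    have heq : (uIoo c t).EqOn h' ((Iic c).piecewise h h') := fun u hu => by
      rw [uIoo_of_le hct] at hu
      exact (piecewise_eq_of_notMem _ _ _ (notMem_Iic.mpr hu.1)).symm
    have hval_t : (Iic c).piecewise w w' t = w' t := by
      rcases hct.eq_or_lt with rfl | hlt
      · rw [piecewise_eq_of_mem _ _ _ self_mem_Iic, hc]
      · exact piecewise_eq_of_notMem _ _ _ (notMem_Iic.mpr hlt)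
    obtain ⟨hint, hval⟩ := hw' c hs'.1 t ht
    refine ⟨hint.congr_uIoo heq, ?_⟩
    rw [← intervalIntegral.integral_congr_uIoo heq, hval, hval_t,
      piecewise_eq_of_mem _ _ _ self_mem_Iic, hc]

theorem lipschitzOnWith (hw : IsPrimitiveOn h w s) [hs : s.OrdConnected] {L : ℝ≥0}
    (hL : ∀ t ∈ s, ‖h t‖ ≤ L) : LipschitzOnWith L w s := by
  refine LipschitzOnWith.of_dist_le_mul fun a ha b hb => ?_
  rw [dist_eq_norm, ← (hw b hb a ha).2, Real.dist_eq]
  exact intervalIntegral.norm_integral_le_of_norm_le_const fun t ht =>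
    hL t (hs.uIcc_subset hb ha (uIoc_subset_uIcc ht))

theorem slope_mem [CompleteSpace E] (hw : IsPrimitiveOn h w s) {a b : ℝ} (ha : a ∈ s)
    (hb : b ∈ s) (hab : a < b) {K : Set E} (hK : Convex ℝ K) (hKc : IsClosed K)
    (hmem : ∀ t ∈ Ioc a b, h t ∈ K) : slope w a b ∈ K := by
  have haverage : ⨍ t in a..b, h t ∈ K := by
    rw [uIoc_of_le hab.le]
    exact hK.set_average_mem hKc (by simp [hab]) (by simp)
      (ae_restrict_of_forall_mem measurableSet_Ioc hmem)
      ((intervalIntegrable_iff_integrableOn_Ioc_of_le hab.le).mp (hw a ha b hb).1)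
  rwa [interval_average_eq, (hw a ha b hb).2] at haverage

end IsPrimitiveOn

theorem isPrimitiveOn_deriv_of_lipschitzWith [FiniteDimensional ℝ E] {z : ℝ → E} {L : ℝ≥0}
    (hz : LipschitzWith L z) : IsPrimitiveOn (deriv z) z univ := by
  intro a _ b _
  have := FiniteDimensional.complete ℝ E
  have hint : IntervalIntegrable (deriv z) volume a b :=
    (intervalIntegrable_const (c := (L : ℝ))).mono_fun'
      (stronglyMeasurable_deriv z).aestronglyMeasurable
      (ae_of_all _ fun _ => norm_deriv_le_of_lipschitz hz)
  refine ⟨hint, (SeparatingDual.eq_iff_forall_dual_eq (R := ℝ)).mpr fun φ => ?_⟩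
  have hφz : LipschitzWith (‖φ‖₊ * L) (φ ∘ z) := φ.lipschitz.comp hz
  calc φ (∫ t in a..b, deriv z t)
      = ∫ t in a..b, φ (deriv z t) := (φ.intervalIntegral_comp_comm hint).symm
    _ = ∫ t in a..b, deriv (φ ∘ z) t := by
        refine intervalIntegral.integral_congr_ae ?_
        filter_upwards [hz.ae_differentiableAt_real] with t ht _
        exact (φ.hasFDerivAt.comp_hasDerivAt t ht.hasDerivAt).deriv.symm
    _ = φ (z b - z a) := by
        rw [hφz.lipschitzOnWith.absolutelyContinuousOnInterval.integral_deriv_eq_sub, map_sub,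
          Function.comp_apply, Function.comp_apply]

end Primitive


section IsSolutionOn

variable {E : Type*} [NormedAddCommGroup E] [NormedSpace ℝ E] {G : E → Set E} {s : Set ℝ}
  {w : ℝ → E}

/-- `w` solves the differential inclusion `w' ∈ G w` on `s`: it is a primitive on `s` of some
velocity `h` with `h t ∈ G (w t)`. The inclusion is imposed at every `t ∈ s`, as in `LambdaD`. -/
def IsSolutionOn (G : E → Set E) (s : Set ℝ) (w : ℝ → E) : Prop :=
  ∃ h, IsPrimitiveOn h w s ∧ ∀ t ∈ s, h t ∈ G (w t)

namespace IsSolutionOn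

theorem comp_sub_right (hw : IsSolutionOn G s w) (c : ℝ) :
    IsSolutionOn G ((· - c) ⁻¹' s) fun t => w (t - c) := by
  obtain ⟨h, hprim, hmem⟩ := hw
  exact ⟨_, hprim.comp_sub_right c, fun t ht => hmem _ ht⟩

theorem comp_neg (hw : IsSolutionOn (-G) s w) : IsSolutionOn G (-s) fun t => w (-t) := by
  obtain ⟨h, hprim, hmem⟩ := hw
  exact ⟨_, hprim.comp_neg, fun t ht => hmem _ ht⟩

theorem piecewise_Iic {w' : ℝ → E} {s' : Set ℝ} {c : ℝ} (hw : IsSolutionOn G s w)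
    (hw' : IsSolutionOn G s' w') (hs : IsGreatest s c) (hs' : IsLeast s' c) (hc : w c = w' c) :
    IsSolutionOn G (s ∪ s') ((Iic c).piecewise w w') := by
  obtain ⟨h, hprim, hmem⟩ := hw
  obtain ⟨h', hprim', hmem'⟩ := hw'
  refine ⟨_, hprim.piecewise_Iic hprim' hs hs' hc, fun t ht => ?_⟩
  by_cases htc : t ∈ Iic c
  · have hts : t ∈ s := ht.elim id fun hts' => by
      rw [le_antisymm htc (hs'.2 hts')]
      exact hs.1
    simpa only [piecewise_eq_of_mem _ _ _ htc] using hmem t hts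
  · have hts' : t ∈ s' := ht.resolve_left fun hts => htc (hs.2 hts)
    simpa only [piecewise_eq_of_notMem _ _ _ htc] using hmem' t hts'

theorem lipschitzWith {L : NNReal} (hw : IsSolutionOn G univ w)
    (hL : ∀ x, ∀ y ∈ G x, ‖y‖ ≤ L) : LipschitzWith L w := by
  obtain ⟨h, hprim, hmem⟩ := hw
  exact lipschitzOnWith_univ.mp (hprim.lipschitzOnWith fun t ht => hL _ _ (hmem t ht))

end IsSolutionOn

end IsSolutionOn

section Euler

variable {E : Type*} [NormedAddCommGroup E] [NormedSpace ℝ E]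

/-- The `n`-th point of the explicit Euler scheme with step `τ` for the vector field `f`. -/
def eulerPoint (f : E → E) (τ : ℝ) (x₀ : E) (n : ℕ) : E :=
  (fun x => x + τ • f x)^[n] x₀

/-- The velocity at time `t` of the Euler polygon of step `τ`. It is meant for `0 ≤ t`; negative
times get the velocity of the first edge. -/
def eulerVelocity (f : E → E) (τ : ℝ) (x₀ : E) (t : ℝ) : E :=
  f (eulerPoint f τ x₀ ⌊t / τ⌋₊)

variable {f : E → E} {B τ δ : ℝ} {x₀ : E} {G : E → Set E}

theorem intervalIntegrable_eulerVelocity (hf : ∀ x, ‖f x‖ ≤ B) (a b : ℝ) :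
    IntervalIntegrable (eulerVelocity f τ x₀) volume a b := by
  have hmeas : StronglyMeasurable (eulerVelocity f τ x₀) :=
    (StronglyMeasurable.of_discrete (f := fun n : ℕ => f (eulerPoint f τ x₀ n))).comp_measurable
      (Nat.measurable_floor.comp (measurable_id.div_const τ))
  exact (intervalIntegrable_const (c := B)).mono_fun' hmeas.aestronglyMeasurable
    (ae_of_all _ fun t => hf _)

theorem eulerPoint_eq_add_integral [CompleteSpace E] (hf : ∀ x, ‖f x‖ ≤ B) (hτ : 0 < τ) (n : ℕ) :
    eulerPoint f τ x₀ n = x₀ + ∫ t in (0 : ℝ)..n * τ, eulerVelocity f τ x₀ t := by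
  induction n with
  | zero => simp [eulerPoint]
  | succ n ih =>
    have hedge : ∫ t in (n * τ)..((n + 1 : ℕ) * τ), eulerVelocity f τ x₀ t
        = τ • f (eulerPoint f τ x₀ n) := by
      have hconst : (uIoo (n * τ) ((n + 1 : ℕ) * τ)).EqOn (eulerVelocity f τ x₀)
          fun _ => f (eulerPoint f τ x₀ n) := fun t ht => by
        rw [uIoo_of_le (by gcongr; simp)] at ht
        have hfloor : ⌊t / τ⌋₊ = n := Nat.floor_eq_on_Ico n _
          ⟨(le_div_iff₀ hτ).mpr ht.1.le, (div_lt_iff₀ hτ).mpr (by exact_mod_cast ht.2)⟩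
        rw [eulerVelocity, hfloor]
      rw [intervalIntegral.integral_congr_uIoo hconst, intervalIntegral.integral_const]
      congr 1
      push_cast
      ring
    calc eulerPoint f τ x₀ (n + 1)
        = eulerPoint f τ x₀ n + τ • f (eulerPoint f τ x₀ n) := Function.iterate_succ_apply' _ _ _
      _ = x₀ + ∫ t in (0 : ℝ)..(n + 1 : ℕ) * τ, eulerVelocity f τ x₀ t := by
        rw [← intervalIntegral.integral_add_adjacent_intervals
          (intervalIntegrable_eulerVelocity hf _ (n * τ))
          (intervalIntegrable_eulerVelocity hf _ _), ← add_assoc, ← ih, hedge]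

theorem exists_isSolutionOn_Ici [CompleteSpace E] (hf : ∀ x, ‖f x‖ ≤ B)
    (hδ : 0 < δ) (hG : ∀ x x', dist x' x < δ → f x' ∈ G x) (x₀ : E) :
    ∃ w, w 0 = x₀ ∧ IsSolutionOn G (Ici 0) w := by
  have hB : 0 ≤ B := (norm_nonneg _).trans (hf x₀)
  set τ := δ / (B + 1) with hτ_def
  have hτ : 0 < τ := by positivity
  set w : ℝ → E := fun t => x₀ + ∫ u in (0 : ℝ)..t, eulerVelocity f τ x₀ u
  have hprim : IsPrimitiveOn (eulerVelocity f τ x₀) w univ :=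
    .const_add_integral (intervalIntegrable_eulerVelocity hf) x₀
  refine ⟨w, by simp [w], _, fun a _ b _ => hprim a trivial b trivial,
    fun t (ht : 0 ≤ t) => hG _ _ ?_⟩
  have hle : ⌊t / τ⌋₊ * τ ≤ t := (le_div_iff₀ hτ).mp (Nat.floor_le (by positivity))
  have hlt : t - ⌊t / τ⌋₊ * τ < τ := by
    have := (div_lt_iff₀ hτ).mp (Nat.lt_floor_add_one (t / τ))
    linarith
  have hLip : LipschitzOnWith ⟨B, hB⟩ w univ := hprim.lipschitzOnWith fun t _ => hf _
  calc dist (eulerPoint f τ x₀ ⌊t / τ⌋₊) (w t)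
      = dist (w (⌊t / τ⌋₊ * τ)) (w t) := by rw [eulerPoint_eq_add_integral hf hτ]
    _ ≤ B * dist (⌊t / τ⌋₊ * τ) t := hLip.dist_le_mul _ trivial _ trivial
    _ = B * (t - ⌊t / τ⌋₊ * τ) := by rw [dist_comm, Real.dist_eq, abs_of_nonneg (by linarith)]
    _ ≤ B * τ := by gcongr
    _ < (B + 1) * τ := by linarith
    _ = δ := by rw [hτ_def]; field_simp

theorem exists_isSolutionOn_Iic [CompleteSpace E] (hf : ∀ x, ‖f x‖ ≤ B)
    (hδ : 0 < δ) (hG : ∀ x x', dist x' x < δ → f x' ∈ G x) (x₀ : E) :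
    ∃ w, w 0 = x₀ ∧ IsSolutionOn G (Iic 0) w := by
  obtain ⟨w, hw0, hw⟩ := exists_isSolutionOn_Ici (f := -f) (G := -G) (B := B)
    (fun x => by simpa using hf x) hδ (fun x x' hx => by simpa using hG x x' hx) x₀
  exact ⟨fun t => w (-t), by simpa using hw0, by simpa using hw.comp_neg⟩

theorem IsSolutionOn.exists_extension_of_Icc [CompleteSpace E] {T : ℝ} {w : ℝ → E}
    (hw : IsSolutionOn G (Icc 0 T) w) (hT : 0 ≤ T) (hf : ∀ x, ‖f x‖ ≤ B) (hδ : 0 < δ)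
    (hG : ∀ x x', dist x' x < δ → f x' ∈ G x) :
    ∃ w', EqOn w' w (Icc 0 T) ∧ IsSolutionOn G univ w' := by
  obtain ⟨p, hp0, hp⟩ := exists_isSolutionOn_Iic hf hδ hG (w 0)
  obtain ⟨q, hq0, hq⟩ := exists_isSolutionOn_Ici hf hδ hG (w T)
  have hpw : IsSolutionOn G (Iic T) ((Iic 0).piecewise p w) := by
    rw [← Iic_union_Icc_eq_Iic hT]
    exact hp.piecewise_Iic hw isGreatest_Iic (isLeast_Icc hT) hp0
  have hqT : IsSolutionOn G (Ici T) fun t => q (t - T) := by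
    simpa using hq.comp_sub_right T
  have hpw_eq : EqOn ((Iic 0).piecewise p w) w (Icc 0 T) := fun t ht => by
    rcases ht.1.eq_or_lt with rfl | ht0
    · rw [piecewise_eq_of_mem _ _ _ self_mem_Iic, hp0]
    · exact piecewise_eq_of_notMem _ _ _ (notMem_Iic.mpr ht0)
  refine ⟨(Iic T).piecewise ((Iic 0).piecewise p w) fun t => q (t - T), fun t ht => ?_, ?_⟩
  · rw [piecewise_eq_of_mem _ _ _ (mem_Iic.mpr ht.2), hpw_eq ht]
  · rw [← Iic_union_Ici (a := T)]
    refine hpw.piecewise_Iic hqT isGreatest_Iic isLeast_Ici ?_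
    rw [hpw_eq (right_mem_Icc.mpr hT), sub_self, hq0]

end Euler

section LimitOfSolutions

variable {E ι : Type*} [NormedAddCommGroup E] [NormedSpace ℝ E] [CompleteSpace E] {l : Filter ι}
  [l.NeBot] {G : ι → E → Set E} {w : ι → ℝ → E} {z : ℝ → E} {t : ℝ} {v : E} {K : Set E}

theorem hasDerivAt_mem_of_tendsto_isSolutionOn (hw : ∀ i, IsSolutionOn (G i) univ (w i))
    (hz : Tendsto w l (𝓝 z)) (hv : HasDerivAt z v t) (hK : Convex ℝ K) (hKc : IsClosed K)
    (hG : ∀ᶠ p : ι × ℝ in l ×ˢ 𝓝 t, G p.1 (w p.1 p.2) ⊆ K) : v ∈ K := by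
  obtain ⟨I, hI, J, hJ, hIJ⟩ := eventually_prod_iff.mp hG
  obtain ⟨r, hr, hball⟩ := Metric.eventually_nhds_iff_ball.mp hJ
  have slope_approx_mem : ∀ i, I i → ∀ a ∈ ball t r, ∀ b ∈ ball t r, a < b →
      slope (w i) a b ∈ K := fun i hi a ha b hb hab => by
    obtain ⟨h, hprim, hmem⟩ := hw i
    refine hprim.slope_mem trivial trivial hab hK hKc fun u hu => hIJ hi (hball u ?_)
      (hmem u trivial)
    exact (convex_ball t r).ordConnected.out ha hb (Ioc_subset_Icc_self hu)
  have slope_mem : ∀ b ∈ ball t r, b ≠ t → slope z t b ∈ K := fun b hb hbt => by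
    refine hKc.mem_of_tendsto (((tendsto_pi_nhds.mp hz b).sub (tendsto_pi_nhds.mp hz t)).const_smul
      (b - t)⁻¹) (hI.mono fun i hi => ?_)
    change slope (w i) t b ∈ K
    rcases hbt.lt_or_gt with hlt | hlt
    · rw [slope_comm]
      exact slope_approx_mem i hi b hb t (mem_ball_self hr) hlt
    · exact slope_approx_mem i hi t (mem_ball_self hr) b hb hlt
  refine hKc.mem_of_tendsto (hasDerivAt_iff_tendsto_slope.mp hv) ?_
  filter_upwards [self_mem_nhdsWithin, mem_nhdsWithin_of_mem_nhds (ball_mem_nhds t hr)]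
    with b hbt hb using slope_mem b hb hbt

end LimitOfSolutions

section Fdelta

variable {m : ℕ} {F : Euc m → Set (Euc m)} {δ ρ B : ℝ} {x x' y : Euc m}

theorem Fdelta_subset_Fdelta (hδ : 0 ≤ δ) (hρ : δ + dist x x' < ρ) :
    Fdelta F δ x ⊆ Fdelta F ρ x' := by
  intro y hy
  have hδρ : δ < ρ := by linarith [dist_nonneg (x := x) (y := x')]
  rw [Fdelta, if_neg (hδ.trans_lt hδρ).ne']
  rcases hδ.eq_or_lt with rfl | hδ
  · rw [Fdelta, if_pos rfl] at hy
    exact ⟨x, by simpa using hρ, by rwa [infDist_zero_of_mem hy]⟩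
  · rw [Fdelta, if_neg hδ.ne'] at hy
    obtain ⟨x'', hx'', hy⟩ := hy
    exact ⟨x'', by linarith [dist_triangle x'' x x'], hy.trans hδρ⟩

theorem subset_Fdelta_of_dist_lt (h : dist x x' < δ) : F x ⊆ Fdelta F δ x' := by
  simpa [Fdelta] using Fdelta_subset_Fdelta (F := F) le_rfl (by rwa [zero_add])

theorem subset_Fdelta_self (hδ : 0 ≤ δ) : F x ⊆ Fdelta F δ x := by
  rcases hδ.eq_or_lt with rfl | hδ
  · simp [Fdelta]
  · exact subset_Fdelta_of_dist_lt (by simpa)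

theorem Fdelta_subset_cthickening {K : Set (Euc m)} (hne : ∀ x, (F x).Nonempty)
    (hK : ∀ x' ∈ closedBall x δ, F x' ⊆ K) : Fdelta F δ x ⊆ cthickening δ K := by
  intro y hy
  rw [Fdelta] at hy
  split_ifs at hy with hδ
  · exact self_subset_cthickening K (hK x (by simp [hδ]) hy)
  · obtain ⟨x', hx', hy⟩ := hy
    obtain ⟨y', hy', hyy'⟩ := (infDist_lt_iff (hne x')).mp hy
    exact mem_cthickening_of_dist_le _ _ _ _ (hK x' hx'.le hy') hyy'.le

theorem norm_le_of_mem_Fdelta (hne : ∀ x, (F x).Nonempty) (hB : ∀ x, ∀ y ∈ F x, ‖y‖ ≤ B)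
    (hδ : 0 ≤ δ) (hy : y ∈ Fdelta F δ x) : ‖y‖ ≤ B + δ := by
  have hB0 : 0 ≤ B := (hne x).elim fun y hy => (norm_nonneg y).trans (hB x y hy)
  have hmem : y ∈ cthickening δ (closedBall 0 B) :=
    Fdelta_subset_cthickening hne (fun x' _ y' hy' => mem_closedBall_zero_iff.mpr (hB x' y' hy')) hy
  rwa [cthickening_closedBall hδ hB0, mem_closedBall_zero_iff, add_comm] at hmem

theorem eventually_Fdelta_subset_cthickening (hF : UpperHemicontinuous F)
    (hne : ∀ x, (F x).Nonempty) (x : Euc m) {η : ℝ} (hη : 0 < η) :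
    ∀ᶠ p : ℝ × Euc m in 𝓝 (0, x), Fdelta F p.1 p.2 ⊆ cthickening η (F x) := by
  obtain ⟨r, hr, hsub⟩ := Metric.eventually_nhds_iff_ball.mp <|
    hF.forall_isOpen x _ isOpen_thickening (self_subset_thickening (half_pos hη) (F x))
  have hδ : ∀ᶠ δ : ℝ in 𝓝 0, δ ≤ η / 2 ∧ δ < r / 2 :=
    (eventually_le_nhds (half_pos hη)).and (eventually_lt_nhds (half_pos hr))
  rw [nhds_prod_eq]
  filter_upwards [hδ.prod_mk (ball_mem_nhds x (half_pos hr))] with ⟨δ, x'⟩ ⟨⟨hδη, hδr⟩, hx'⟩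
  have hball : closedBall x' δ ⊆ ball x r := closedBall_subset_ball' (by
    linarith [mem_ball.mp hx'])
  calc Fdelta F δ x'
      ⊆ cthickening δ (thickening (η / 2) (F x)) :=
        Fdelta_subset_cthickening hne fun x'' hx'' => hsub x'' (hball hx'')
    _ ⊆ cthickening (η / 2) (thickening (η / 2) (F x)) := cthickening_mono hδη _
    _ ⊆ cthickening (η / 2 + η / 2) (F x) := cthickening_thickening_subset (half_pos hη).le _ _
    _ = cthickening η (F x) := by rw [add_halves]

theorem exists_extension_of_isSolutionOn_Fdelta {w : ℝ → Euc m} {T : ℝ}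
    (hne : ∀ x, (F x).Nonempty) (hB : ∀ x, ∀ y ∈ F x, ‖y‖ ≤ B) (hδ : 0 < δ) (hT : 0 ≤ T)
    (hw : IsSolutionOn (Fdelta F δ) (Icc 0 T) w) :
    ∃ w', EqOn w' w (Icc 0 T) ∧ IsSolutionOn (Fdelta F δ) univ w' := by
  choose f hf using hne
  exact hw.exists_extension_of_Icc hT (fun x => hB x _ (hf x)) hδ fun x x' hx =>
    subset_Fdelta_of_dist_lt hx (hf x')

end Fdelta

section Shadowing

open scoped NNReal

variable {m : ℕ} {F : Euc m → Set (Euc m)} {B : ℝ} {M : Set (Euc m)}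

theorem isSolution_of_tendsto {ι : Type*} {l : Filter ι} [l.NeBot] {L : ℝ≥0}
    (hF : UpperHemicontinuous F) (hne : ∀ x, (F x).Nonempty) (hclosed : ∀ x, IsClosed (F x))
    (hconv : ∀ x, Convex ℝ (F x)) {δ : ι → ℝ} (hδ : Tendsto δ l (𝓝 0)) {w : ι → ℝ → Euc m}
    (hw : ∀ i, IsSolutionOn (Fdelta F (δ i)) univ (w i)) (hL : ∀ i, LipschitzWith L (w i))
    {z : ℝ → Euc m} (hz : Tendsto w l (𝓝 z)) : IsSolution F z := by
  have hzL : LipschitzWith L z :=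
    (isClosed_setOfPred_lipschitzWith L).mem_of_tendsto hz (Eventually.of_forall hL)
  have hprim := isPrimitiveOn_deriv_of_lipschitzWith hzL
  have deriv_mem : ∀ t, DifferentiableAt ℝ z t → deriv z t ∈ F (z t) := fun t ht => by
    rw [← (hclosed (z t)).closure_eq, closure_eq_iInter_cthickening]
    refine mem_iInter₂.mpr fun η hη =>
      hasDerivAt_mem_of_tendsto_isSolutionOn hw hz ht.hasDerivAt ((hconv _).cthickening η)
        isClosed_cthickening ?_
    have hjoint : Tendsto (fun p : ι × ℝ => (δ p.1, w p.1 p.2)) (l ×ˢ 𝓝 t) (𝓝 (0, z t)) :=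
      (hδ.comp tendsto_fst).prodMk_nhds (tendsto_prod_nhds_of_tendsto_of_lipschitzWith hL hz t)
    exact hjoint.eventually (eventually_Fdelta_subset_cthickening hF hne (z t) hη)
  refine ⟨hzL.continuous, deriv z, fun a b => (hprim a trivial b trivial).1,
    hzL.ae_differentiableAt_real.mono deriv_mem, fun t => ?_⟩
  rw [(hprim 0 trivial t trivial).2, add_sub_cancel]

theorem IsStandardSVM.upperHemicontinuous (hF : IsStandardSVM F)
    (hB : ∀ x, ∀ y ∈ F x, ‖y‖ ≤ B) : UpperHemicontinuous F :=
  upperHemicontinuous_of_isClosed_graph hF.2.1 (isCompact_closedBall 0 B) fun x y hy =>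
    mem_closedBall_zero_iff.mpr (hB x y hy)

theorem exists_isSolution_tendstoUniformlyOn {ι : Type*} (hF : IsStandardSVM F)
    (hB : ∀ x, ∀ y ∈ F x, ‖y‖ ≤ B) (hM : IsCompact M) {U : Ultrafilter ι} {δ : ι → ℝ}
    (hδ : ∀ i, δ i ∈ Icc 0 1) (hδ0 : Tendsto δ U (𝓝 0)) {w : ι → ℝ → Euc m}
    (hw : ∀ i, IsSolutionOn (Fdelta F (δ i)) univ (w i)) (hwM : ∀ i, w i 0 ∈ M) :
    ∃ z, IsSolution F z ∧ z 0 ∈ M ∧ ∀ K, IsCompact K → TendstoUniformlyOn w z U K := by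
  have hne x : (F x).Nonempty := (hF.1 x).1
  have hL : ∀ i, LipschitzWith (B + 1).toNNReal (w i) := fun i =>
    (hw i).lipschitzWith fun x y hy => ((norm_le_of_mem_Fdelta hne hB (hδ i).1 hy).trans
      (by linarith [(hδ i).2])).trans (Real.le_coe_toNNReal _)
  obtain ⟨z, hz⟩ := exists_tendsto_ultrafilter_of_lipschitzWith hL hM.isBounded hwM U
  refine ⟨z, ?_, ?_, fun K hK => tendstoUniformlyOn_of_tendsto_of_lipschitzWith hL hz hK⟩
  · exact isSolution_of_tendsto (hF.upperHemicontinuous hB) hne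
      (fun x => (hF.1 x).2.1.isClosed) (fun x => (hF.1 x).2.2) hδ0 hw hL hz
  · exact hM.isClosed.mem_of_tendsto (tendsto_pi_nhds.mp hz 0) (Eventually.of_forall hwM)

theorem exists_pos_forall_isSolutionOn_Fdelta_shadowed (hF : IsStandardSVM F)
    (hB : ∀ x, ∀ y ∈ F x, ‖y‖ ≤ B) (hM : IsCompact M) {T α : ℝ} (hT : 0 ≤ T) (hα : 0 < α) :
    ∃ ρ > 0, ∀ w, IsSolutionOn (Fdelta F ρ) (Icc 0 T) w → w 0 ∈ M →
      ∃ z, IsSolution F z ∧ z 0 ∈ M ∧ ∀ t ∈ Icc 0 T, dist (z t) (w t) < α := by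
  by_contra! hcontra
  choose w hw hwM hfar using fun n : ℕ => hcontra (1 / (n + 1)) Nat.one_div_pos_of_nat
  choose w' hw'w hw' using fun n => exists_extension_of_isSolutionOn_Fdelta
    (fun x => (hF.1 x).1) hB Nat.one_div_pos_of_nat hT (hw n)
  have hw'M : ∀ n, w' n 0 ∈ M := fun n => by
    rw [hw'w n (left_mem_Icc.mpr hT)]
    exact hwM n
  have hδ : ∀ n : ℕ, (1 / (n + 1) : ℝ) ∈ Icc 0 1 := fun n =>
    ⟨Nat.one_div_pos_of_nat.le, Nat.one_div_le_one_div n.zero_le |>.trans (by simp)⟩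
  have hδ0 : Tendsto (fun n : ℕ => (1 / (n + 1) : ℝ)) (hyperfilter ℕ) (𝓝 0) :=
    tendsto_one_div_add_atTop_nhds_zero_nat.mono_left Nat.hyperfilter_le_atTop
  obtain ⟨z, hz, hzM, hunif⟩ :=
    exists_isSolution_tendstoUniformlyOn hF hB hM hδ hδ0 hw' hw'M
  obtain ⟨n, hn⟩ := (Metric.tendstoUniformlyOn_iff.mp (hunif _ isCompact_Icc) α hα).exists
  obtain ⟨t, ht, hαt⟩ := hfar n z hz hzM
  exact hαt.not_gt (hw'w n ht ▸ hn t ht)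

end Shadowing

section LambdaD

variable {m : ℕ} {F : Euc m → Set (Euc m)} {B T δ : ℝ} {hT : 0 ≤ T}

theorem LambdaD_nonempty (hF : IsStandardSVM F) (hB : ∀ x, ∀ y ∈ F x, ‖y‖ ≤ B) (hδ : 0 ≤ δ)
    (z : C(Icc 0 T, Euc m)) : (LambdaD F T hT δ z).Nonempty := by
  obtain ⟨f, hfmeas, hf⟩ := exists_measurable_selection_of_upperHemicontinuous
    (hF.upperHemicontinuous hB) (fun x => (hF.1 x).1) (fun x => (hF.1 x).2.1)
    (fun x => (hF.1 x).2.2)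
  set h : ℝ → Euc m := fun t => f (IccExtend hT z t)
  have hmeas : Measurable h := hfmeas.comp (z.continuous.comp continuous_projIcc).measurable
  have hint : ∀ a b, IntervalIntegrable h volume a b := fun a b =>
    (intervalIntegrable_const (c := B)).mono_fun' hmeas.aestronglyMeasurable
      (ae_of_all _ fun t => hB _ _ (hf _))
  refine ⟨⟨fun τ => z ⟨0, left_mem_Icc.mpr hT⟩ + ∫ u in (0 : ℝ)..τ, h u, ?_⟩, h, hint 0 T,
    fun u => ?_, fun τ => rfl⟩
  · exact continuous_const.add
      ((intervalIntegral.continuous_primitive hint 0).comp continuous_subtype_val)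
  · simpa [h] using subset_Fdelta_self hδ (hf (z u))

theorem apply_zero_of_mem_LambdaD {y z : C(Icc 0 T, Euc m)} (hy : y ∈ LambdaD F T hT δ z) :
    y ⟨0, left_mem_Icc.mpr hT⟩ = z ⟨0, left_mem_Icc.mpr hT⟩ := by
  obtain ⟨h, -, -, hval⟩ := hy
  simp [hval]

theorem isSolutionOn_of_mem_LambdaD {ρ : ℝ} {y z : C(Icc 0 T, Euc m)} (hδ : 0 ≤ δ)
    (hρ : δ + dist z y < ρ) (hy : y ∈ LambdaD F T hT δ z) :
    IsSolutionOn (Fdelta F ρ) (Icc 0 T) (IccExtend hT y) := by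
  have hy0 := apply_zero_of_mem_LambdaD hy
  obtain ⟨h, hint, hmem, hval⟩ := hy
  refine ⟨h, .of_base 0 fun t ht => ⟨hint.mono_set ?_, ?_⟩, fun t ht => ?_⟩
  · rw [uIcc_of_le ht.1, uIcc_of_le hT]
    exact Icc_subset_Icc_right ht.2
  · rw [IccExtend_of_mem hT _ ht, IccExtend_left, hy0, hval, add_sub_cancel_left]
  · rw [IccExtend_of_mem hT _ ht]
    exact Fdelta_subset_Fdelta hδ ((add_le_add_right (z.dist_apply_le_dist _) δ).trans_lt hρ)
      (hmem ⟨t, ht⟩)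

end LambdaD

theorem dist_to_solutions_of_dist_to_LambdaD_general {m : ℕ} {M : Set (Euc m)} (hM : IsCompact M)
    {F : Euc m → Set (Euc m)} (hF : IsStandardSVM F)
    (hFbdd : ∃ B : ℝ, ∀ x, ∀ y ∈ F x, ‖y‖ ≤ B) {T : ℝ} (hT : 0 ≤ T) :
    ∀ α > 0, ∃ ε > 0, ∃ δ₀ > 0, ∀ δ : ℝ, 0 ≤ δ → δ < δ₀ →
      ∀ z : C(Icc (0 : ℝ) T, Euc m), z ⟨0, left_mem_Icc.mpr hT⟩ ∈ M →
        infDist z (LambdaD F T hT δ z) < ε → infDist z (SolRestrict F T M) < α := by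
  intro α hα
  obtain ⟨B, hB⟩ := hFbdd
  obtain ⟨ρ, hρ, hshadow⟩ :=
    exists_pos_forall_isSolutionOn_Fdelta_shadowed hF hB hM hT (half_pos hα)
  refine ⟨min (ρ / 2) (α / 2), by positivity, ρ / 2, half_pos hρ, fun δ hδ hδρ z hzM hz => ?_⟩
  obtain ⟨y, hy, hzy⟩ := (infDist_lt_iff (LambdaD_nonempty hF hB hδ z)).mp hz
  obtain ⟨hzyρ, hzyα⟩ := lt_min_iff.mp hzy
  obtain ⟨x, hx, hxM, hxy⟩ := hshadow (IccExtend hT y)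
    (isSolutionOn_of_mem_LambdaD hδ (by linarith) hy)
    (by rwa [IccExtend_left, apply_zero_of_mem_LambdaD hy])
  let x' : C(Icc (0 : ℝ) T, Euc m) := ⟨fun t => x t, hx.1.comp continuous_subtype_val⟩
  have hyx' : dist y x' ≤ α / 2 := (ContinuousMap.dist_le (half_pos hα).le).mpr fun t => by
    simpa [x', dist_comm] using (hxy t t.2).le
  calc infDist z (SolRestrict F T M)
      ≤ dist z x' := infDist_le_dist_of_mem ⟨x, hx, hxM, fun _ => rfl⟩
    _ ≤ dist z y + dist y x' := dist_triangle _ _ _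
    _ < α := by linarith

/-- (Lemma `distFix`.) For a bounded standard `F`, `T, C > 0` and the
compact set `K_C` of Lipschitz paths starting in the compact set `M`: for every `α > 0`
there are `ε > 0` and `δ₀ > 0` such that for every `0 ≤ δ < δ₀` and every `z ∈ K_C`,
`d_{[0,T]}(z, Λ^δ(z)) < ε` implies `d_{[0,T]}(z, S_{[0,T]}) < α`. -/
theorem dist_to_solutions_of_dist_to_LambdaD
    {m : ℕ} (M : Set (Euc m)) (hM : IsCompact M)
    (F : Euc m → Set (Euc m)) (hF : IsStandardSVM F)
    (hFbdd : ∃ B : ℝ, ∀ x, ∀ y ∈ F x, ‖y‖ ≤ B)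
    (T : ℝ) (hT : 0 < T) (C : ℝ) (hC : 0 < C) :
    ∀ α > 0, ∃ ε > 0, ∃ δ₀ > 0, ∀ δ : ℝ, 0 ≤ δ → δ < δ₀ →
      ∀ z ∈ KC F T hT.le M C,
        Metric.infDist z (LambdaD F T hT.le δ z) < ε →
        Metric.infDist z (SolRestrict F T M) < α := by
  intro α hα
  obtain ⟨ε, hε, δ₀, hδ₀, hgen⟩ :=
    dist_to_solutions_of_dist_to_LambdaD_general hM hF hFbdd hT.le α hα
  exact ⟨ε, hε, δ₀, hδ₀, fun δ hδ hδδ₀ z hz => hgen δ hδ hδδ₀ z hz.2⟩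
end
end

section
/- Let (x_n) be a generalised stochastic approximation process relative to a standard set-valued map F, with values in a compact set M ⊂ ℝ^m, whose noise (U_n) satisfies condition (bruit2). Let X be the continuous-time affine interpolation of (x_n), L(X) = ⋂_{t≥0} closure{X(s) : s ≥ t} its limit set and Att(X) the set of attainable points. If A is an attractor for the set-valued dynamical system Φ induced by F, with basin of attraction B(A), and Att(X) ∩ B(A) ≠ ∅, then P(L(X) ⊂ A) > 0. -/
open MeasureTheory Filter Topology Metric Set Pointwise

noncomputable section

/-!
With positive probability the process visits a small ball around an attainable point `p` of the
basin at a late step `k`; conditionally on the past, (bruit2) makes the noise accumulated over every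
later time window of fixed length small with positive probability. On this event, subtracting the
accumulated noise turns the process into an Euler scheme for `F`, and limits of Euler schemes are
solutions of the inclusion: a derivative of the limit curve outside `F` would be separated from `F`
by a linear functional. By compactness the process therefore shadows the flow over bounded times.
It first follows the solutions from `p` into a neighbourhood of `A` that `A` attracts uniformly, and
then returns to it window after window. Since the noise vanishes asymptotically by (iii), the same
shadowing with smaller and smaller errors makes the trapped process converge to `A`.
-/

/-! ### Locally Lipschitz curves -/

section LocallyLipschitzCurves

variable {E : Type*} [NormedAddCommGroup E]

lemma locallyLipschitz_add {α : Type*} [PseudoEMetricSpace α] {f g : α → E}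
    (hf : LocallyLipschitz f) (hg : LocallyLipschitz g) : LocallyLipschitz (fun t => f t + g t) :=
  (LipschitzWith.prod_fst.add LipschitzWith.prod_snd).locallyLipschitz.comp (hf.prodMk hg)

variable [NormedSpace ℝ E] [FiniteDimensional ℝ E] {z : ℝ → E}

lemma intervalIntegrable_deriv_of_locallyLipschitz (hz : LocallyLipschitz z) (a b : ℝ) :
    IntervalIntegrable (deriv z) volume a b := by
  have : CompleteSpace E := FiniteDimensional.complete ℝ E
  borelize E
  suffices LocallyIntegrable (deriv z) from
    (this.integrableOn_isCompact isCompact_uIcc).intervalIntegrable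
  intro t
  obtain ⟨K, s, hs, hK⟩ := hz t
  refine (volume.finiteAt_nhds t).integrableAtFilter
    (stronglyMeasurable_deriv z).aestronglyMeasurable.stronglyMeasurableAtFilter ⟨K, ?_⟩
  rw [eventually_map]
  filter_upwards [eventually_mem_nhds_iff.2 hs] with u hu
  exact norm_deriv_le_of_lipschitzOn hu hK

lemma ae_differentiableAt_of_locallyLipschitz
    (hz : LocallyLipschitz z) : ∀ᵐ t, DifferentiableAt ℝ z t := by
  refine LocallyBoundedVariationOn.ae_differentiableAt fun a b _ _ => ?_
  obtain ⟨K, hK⟩ := (hz.locallyLipschitzOn (s := uIcc a b)).exists_lipschitzOnWith_of_compact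
    isCompact_uIcc
  have h_var := hK.locallyBoundedVariationOn a b left_mem_uIcc right_mem_uIcc
  exact BoundedVariationOn.mono h_var fun t ht => ⟨Icc_subset_uIcc ht.2, ht.2⟩

lemma integral_deriv_eq_sub_of_locallyLipschitz
    (hz : LocallyLipschitz z) (a b : ℝ) : ∫ t in a..b, deriv z t = z b - z a := by
  have : CompleteSpace E := FiniteDimensional.complete ℝ E
  refine (SeparatingDual.eq_iff_forall_dual_eq (R := ℝ)).2 fun φ => ?_
  have hφz : AbsolutelyContinuousOnInterval (fun t => φ (z t)) a b := by
    obtain ⟨K, hK⟩ := (hz.locallyLipschitzOn (s := uIcc a b)).exists_lipschitzOnWith_of_compact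
      isCompact_uIcc
    exact (φ.lipschitz.comp_lipschitzOnWith hK).absolutelyContinuousOnInterval
  calc φ (∫ t in a..b, deriv z t)
      = ∫ t in a..b, φ (deriv z t) := (φ.intervalIntegral_comp_comm
        (intervalIntegrable_deriv_of_locallyLipschitz hz a b)).symm
    _ = ∫ t in a..b, deriv (fun s => φ (z s)) t := by
      refine intervalIntegral.integral_congr_ae ?_
      filter_upwards [ae_differentiableAt_of_locallyLipschitz hz] with t ht _
      exact (φ.hasFDerivAt.comp_hasDerivAt t ht.hasDerivAt).deriv.symm
    _ = φ (z b - z a) := by rw [hφz.integral_deriv_eq_sub, map_sub]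

end LocallyLipschitzCurves

/-! ### Solutions and forward solutions -/

section Solutions

variable {m : ℕ} {F : Euc m → Set (Euc m)} {z w : ℝ → Euc m}

lemma isSolution_of_locallyLipschitz (hz : LocallyLipschitz z)
    (hderiv : ∀ᵐ t, ∀ d, HasDerivAt z d t → d ∈ F (z t)) : IsSolution F z := by
  refine ⟨hz.continuous, deriv z, fun a b =>
    intervalIntegrable_deriv_of_locallyLipschitz hz a b, ?_, fun t => ?_⟩
  · filter_upwards [hderiv, ae_differentiableAt_of_locallyLipschitz hz] with t ht hdiff
    exact ht _ hdiff.hasDerivAt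
  · rw [integral_deriv_eq_sub_of_locallyLipschitz hz, add_sub_cancel]

/-- A solution of `dx/dt ∈ F x` on `[0, ∞)`, in the pointwise form in which limits of Euler schemes
produce it: locally Lipschitz on `[0, ∞)`, with every derivative at a positive time lying in `F`.
The values at negative times are irrelevant. -/
structure IsForwardSolution (F : Euc m → Set (Euc m)) (z : ℝ → Euc m) : Prop where
  locallyLipschitzOn : LocallyLipschitzOn (Ici 0) z
  deriv_mem : ∀ t > 0, ∀ d, HasDerivAt z d t → d ∈ F (z t)

namespace IsForwardSolution

lemma locallyLipschitz_comp_max_zero (hz : IsForwardSolution F z) {g : ℝ → ℝ}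
    (hg : LocallyLipschitz g) : LocallyLipschitz (fun t => z (max (g t) 0)) :=
  (locallyLipschitzOn_iff_restrict.1 hz.locallyLipschitzOn).comp
    (g := fun t => (⟨max (g t) 0, le_max_right (g t) 0⟩ : Ici (0 : ℝ))) fun t => hg.max_const 0 t

/-- Reversing time turns solutions of `-F` into solutions of `F`. -/
lemma exists_isSolution_eqOn (hz : IsForwardSolution F z)
    (hw : IsForwardSolution (fun x => -F x) w) (h0 : z 0 = w 0) :
    ∃ y, IsSolution F y ∧ EqOn y z (Ici 0) := by
  set y : ℝ → Euc m := fun t => z (max t 0) + w (max (-t) 0) + -w 0 with hy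
  have y_of_nonneg : ∀ t, 0 ≤ t → y t = z t := fun t ht => by
    simp [hy, max_eq_left ht, max_eq_right (neg_nonpos.2 ht)]
  have y_neg_of_nonneg : ∀ t, 0 ≤ t → y (-t) = w t := fun t ht => by
    simp [hy, max_eq_left ht, max_eq_right (neg_nonpos.2 ht), h0]
  have hy_lip : LocallyLipschitz y := locallyLipschitz_add
    (locallyLipschitz_add (hz.locallyLipschitz_comp_max_zero (g := id) LocallyLipschitz.id)
      (hw.locallyLipschitz_comp_max_zero (g := fun t => -t) LocallyLipschitz.id.neg))
    (LocallyLipschitz.const (-w 0))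
  refine ⟨y, isSolution_of_locallyLipschitz hy_lip ?_, y_of_nonneg⟩
  have h_ne : ∀ᵐ t : ℝ, t ≠ 0 := by simp [ae_iff]
  filter_upwards [h_ne] with t ht d hd
  rcases ht.lt_or_gt with h_neg | h_pos
  · obtain ⟨s, rfl⟩ : ∃ s, t = -s := ⟨-t, (neg_neg t).symm⟩
    have h_refl : HasDerivAt (fun u => y (-u)) (-d) s := by
      simpa [Function.comp_def] using hd.scomp s (hasDerivAt_neg s)
    have h_eq : w =ᶠ[𝓝 s] fun u => y (-u) := by
      filter_upwards [lt_mem_nhds (neg_lt_zero.1 h_neg)] with u hu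
      exact (y_neg_of_nonneg u hu.le).symm
    have := hw.deriv_mem s (neg_lt_zero.1 h_neg) _ (h_refl.congr_of_eventuallyEq h_eq)
    rwa [y_neg_of_nonneg s (neg_lt_zero.1 h_neg).le, ← Set.neg_mem_neg]
  · have h_eq : z =ᶠ[𝓝 t] y := by
      filter_upwards [lt_mem_nhds h_pos] with u hu using (y_of_nonneg u hu.le).symm
    rw [y_of_nonneg t h_pos.le]
    exact hz.deriv_mem t h_pos d (hd.congr_of_eventuallyEq h_eq)

end IsForwardSolution

end Solutions

/-! ### The time grid -/

section TimeGrid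

variable {γ : ℕ → ℝ}

@[simp] lemma tauOf_zero : tauOf γ 0 = 0 := by simp [tauOf]

lemma tauOf_succ (n : ℕ) : tauOf γ (n + 1) = tauOf γ n + γ (n + 1) := by
  rw [tauOf, tauOf, Finset.sum_range_succ]

lemma tauOf_sub_tauOf {k l : ℕ} (h : k ≤ l) :
    tauOf γ l - tauOf γ k = ∑ i ∈ Finset.Ico k l, γ (i + 1) :=
  (Finset.sum_Ico_eq_sub _ h).symm

lemma tauOf_shift (k i : ℕ) : tauOf (fun j => γ (k + j)) i = tauOf γ (k + i) - tauOf γ k := by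
  rw [tauOf_sub_tauOf (Nat.le_add_right k i), Finset.sum_Ico_eq_sum_range, Nat.add_sub_cancel_left]
  rfl

/-- Positive step sizes whose partial sums `τ_n` exhaust `[0, ∞)`. -/
structure IsTimeGrid (γ : ℕ → ℝ) : Prop where
  pos : ∀ n, 0 < γ n
  tendsto_tauOf : Tendsto (tauOf γ) atTop atTop

namespace IsTimeGrid

lemma const {δ : ℝ} (hδ : 0 < δ) : IsTimeGrid (fun _ => δ) where
  pos _ := hδ
  tendsto_tauOf := by
    refine (tendsto_natCast_atTop_atTop.atTop_mul_const hδ).congr fun n => ?_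
    simp [tauOf]

lemma shift (hγ : IsTimeGrid γ) (k : ℕ) : IsTimeGrid (fun i => γ (k + i)) where
  pos i := hγ.pos (k + i)
  tendsto_tauOf := by
    refine (tendsto_atTop_add_const_right _ (-tauOf γ k)
      ((tendsto_add_atTop_iff_nat k).2 hγ.tendsto_tauOf)).congr fun i => ?_
    rw [tauOf_shift, add_comm i, sub_eq_add_neg]

lemma strictMono_tauOf (hγ : IsTimeGrid γ) : StrictMono (tauOf γ) :=
  strictMono_nat_of_lt_succ fun n => by rw [tauOf_succ]; linarith [hγ.pos (n + 1)]

lemma monotone_tauOf (hγ : IsTimeGrid γ) : Monotone (tauOf γ) := hγ.strictMono_tauOf.monotone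

lemma tauOf_nonneg (hγ : IsTimeGrid γ) (n : ℕ) : 0 ≤ tauOf γ n :=
  Finset.sum_nonneg fun _ _ => (hγ.pos _).le

lemma le_mIdx_iff (hγ : IsTimeGrid γ) {t : ℝ} (ht : 0 ≤ t) {i : ℕ} :
    i ≤ mIdx γ t ↔ tauOf γ i ≤ t := by
  have h_bdd : BddAbove {j | tauOf γ j ≤ t} := by
    obtain ⟨N, hN⟩ := (hγ.tendsto_tauOf.eventually_gt_atTop t).exists
    exact ⟨N, fun j hj => (hγ.strictMono_tauOf.lt_iff_lt.1 (lt_of_le_of_lt hj hN)).le⟩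
  have h_mem : tauOf γ (mIdx γ t) ≤ t := Nat.sSup_mem ⟨0, by simpa using ht⟩ h_bdd
  exact ⟨fun h => (hγ.monotone_tauOf h).trans h_mem, fun h => le_csSup h_bdd h⟩

lemma tauOf_mIdx_le (hγ : IsTimeGrid γ) {t : ℝ} (ht : 0 ≤ t) : tauOf γ (mIdx γ t) ≤ t :=
  (hγ.le_mIdx_iff ht).1 le_rfl

lemma lt_tauOf_mIdx_succ (hγ : IsTimeGrid γ) {t : ℝ} (ht : 0 ≤ t) :
    t < tauOf γ (mIdx γ t + 1) := by
  by_contra! h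
  exact absurd ((hγ.le_mIdx_iff ht).2 h) (Nat.not_succ_le_self _)

lemma mIdx_le_mIdx (hγ : IsTimeGrid γ) {s t : ℝ} (hs : 0 ≤ s) (hst : s ≤ t) :
    mIdx γ s ≤ mIdx γ t :=
  (hγ.le_mIdx_iff (hs.trans hst)).2 ((hγ.tauOf_mIdx_le hs).trans hst)

lemma tendsto_mIdx_atTop (hγ : IsTimeGrid γ) : Tendsto (mIdx γ) atTop atTop :=
  tendsto_atTop.2 fun i => by
    filter_upwards [eventually_ge_atTop (tauOf γ i)] with t ht
    exact (hγ.le_mIdx_iff ((hγ.tauOf_nonneg i).trans ht)).2 ht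

end IsTimeGrid

end TimeGrid

/-! ### Standard set-valued maps -/

section Fdelta

variable {m : ℕ} {F : Euc m → Set (Euc m)} {δ ε : ℝ} {x y f : Euc m}

lemma mem_Fdelta (hε : 0 < ε) :
    f ∈ Fdelta F ε x ↔ ∃ z, dist z x < ε ∧ infDist f (F z) < ε := by
  rw [Fdelta, if_neg hε.ne', mem_ofPred_eq]

lemma subset_Fdelta (hε : 0 < ε) : F x ⊆ Fdelta F ε x := fun f hf =>
  (mem_Fdelta hε).2 ⟨x, by rwa [dist_self], by rwa [infDist_zero_of_mem hf]⟩

lemma Fdelta_subset_Fdelta_add (hε : 0 < ε) (hδ : 0 ≤ δ) (hxy : dist x y ≤ δ) :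
    Fdelta F ε x ⊆ Fdelta F (ε + δ) y := fun f hf => by
  obtain ⟨z, hzx, hfz⟩ := (mem_Fdelta hε).1 hf
  refine (mem_Fdelta (by linarith)).2 ⟨z, ?_, by linarith⟩
  linarith [dist_triangle z x y]

lemma Fdelta_mono (hδ : 0 < δ) (h : δ ≤ ε) : Fdelta F δ x ⊆ Fdelta F ε x := by
  simpa using Fdelta_subset_Fdelta_add hδ (sub_nonneg.2 h) (by simpa using h : dist x x ≤ ε - δ)

end Fdelta

namespace IsStandardSVM

variable {m : ℕ} {F : Euc m → Set (Euc m)}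

lemma nonempty (hF : IsStandardSVM F) (x : Euc m) : (F x).Nonempty := (hF.1 x).1

lemma isCompact (hF : IsStandardSVM F) (x : Euc m) : IsCompact (F x) := (hF.1 x).2.1

lemma convex (hF : IsStandardSVM F) (x : Euc m) : Convex ℝ (F x) := (hF.1 x).2.2

lemma isClosed_graph (hF : IsStandardSVM F) : IsClosed {p : Euc m × Euc m | p.2 ∈ F p.1} := hF.2.1

lemma exists_growth (hF : IsStandardSVM F) :
    ∃ c > 0, ∀ x, ∀ f ∈ F x, ‖f‖ ≤ c * (1 + ‖x‖) := hF.2.2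

protected lemma neg (hF : IsStandardSVM F) : IsStandardSVM (fun x => -F x) := by
  refine ⟨fun x => ⟨(hF.nonempty x).neg, (hF.isCompact x).neg, (hF.convex x).neg⟩, ?_, ?_⟩
  · exact hF.isClosed_graph.preimage (continuous_fst.prodMk continuous_snd.neg)
  · obtain ⟨c, hc, hgrowth⟩ := hF.exists_growth
    exact ⟨c, hc, fun x f hf => norm_neg f ▸ hgrowth x (-f) hf⟩

lemma exists_mem_of_mem_Fdelta (hF : IsStandardSVM F) {ε : ℝ} (hε : 0 < ε) {x f : Euc m}
    (hf : f ∈ Fdelta F ε x) : ∃ z, dist z x < ε ∧ ∃ g ∈ F z, dist f g < ε := by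
  obtain ⟨z, hzx, hfz⟩ := (mem_Fdelta hε).1 hf
  exact ⟨z, hzx, (infDist_lt_iff (hF.nonempty z)).1 hfz⟩

lemma exists_growth_Fdelta (hF : IsStandardSVM F) :
    ∃ c > 0, ∀ ε ∈ Ioc (0 : ℝ) 1, ∀ x, ∀ f ∈ Fdelta F ε x, ‖f‖ ≤ c * (1 + ‖x‖) := by
  obtain ⟨c, hc, hgrowth⟩ := hF.exists_growth
  refine ⟨2 * c + 1, by positivity, fun ε hε x f hf => ?_⟩
  obtain ⟨z, hzx, g, hg, hfg⟩ := hF.exists_mem_of_mem_Fdelta hε.1 hf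
  have hz : ‖z‖ ≤ ‖x‖ + 1 := by
    linarith [norm_le_norm_add_norm_sub' z x, dist_eq_norm z x, hε.2]
  calc ‖f‖ ≤ ‖g‖ + 1 := by linarith [norm_le_norm_add_norm_sub' f g, dist_eq_norm f g, hε.2]
    _ ≤ c * (1 + ‖z‖) + 1 := by gcongr; exact hgrowth z g hg
    _ ≤ c * (1 + (‖x‖ + 1)) + 1 := by gcongr
    _ ≤ (2 * c + 1) * (1 + ‖x‖) := by nlinarith [norm_nonneg x]

lemma upperHemicontinuousAt (hF : IsStandardSVM F) (y : Euc m) : UpperHemicontinuousAt F y := by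
  obtain ⟨c, hc, hgrowth⟩ := hF.exists_growth
  refine .of_sequences (isCompact_closedBall (0 : Euc m) (c * (1 + (‖y‖ + 1)))).isSeqCompact ?_
    fun u hu f hf g hg => hF.isClosed_graph.mem_of_tendsto (hu.prodMk_nhds hg)
      (Eventually.of_forall hf)
  filter_upwards [continuous_norm.continuousAt.eventually (gt_mem_nhds (lt_add_one ‖y‖))]
    with x hx f hf
  rw [mem_closedBall_zero_iff]
  exact (hgrowth x f hf).trans (by gcongr)

lemma exists_Fdelta_subset (hF : IsStandardSVM F) {y : Euc m} {O : Set (Euc m)} (hO : IsOpen O)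
    (hy : F y ⊆ O) : ∃ ρ > 0, ∀ x ∈ ball y ρ, Fdelta F ρ x ⊆ O := by
  obtain ⟨δ, hδ, hδO⟩ := (hF.isCompact y).exists_thickening_subset_open hO hy
  obtain ⟨r, hr, hrF⟩ := Metric.eventually_nhds_iff.1 <|
    upperHemicontinuousAt_iff_forall_isOpen.1 (hF.upperHemicontinuousAt y) _
      isOpen_thickening (self_subset_thickening (half_pos hδ) (F y))
  refine ⟨min (r / 2) (δ / 2), by positivity, fun x hx f hf => hδO ?_⟩
  obtain ⟨z, hzx, g, hg, hfg⟩ := hF.exists_mem_of_mem_Fdelta (by positivity) hf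
  have hzy : dist z y < r := by
    have := dist_triangle z x y
    linarith [mem_ball.1 hx, min_le_left (r / 2) (δ / 2)]
  obtain ⟨g', hg', hgg'⟩ := mem_thickening_iff.1 (hrF hzy hg)
  refine mem_thickening_iff.2 ⟨g', hg', ?_⟩
  linarith [dist_triangle f g g', min_le_right (r / 2) (δ / 2)]

end IsStandardSVM

/-! ### Euler schemes -/

section EulerScheme

variable {m : ℕ} {F : Euc m → Set (Euc m)} {ε : ℝ} {γ : ℕ → ℝ} {x : ℕ → Euc m}

/-- An Euler polygon of `dx/dt ∈ F x` for the step sizes `γ`, in which the mesh and the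
perturbation of the drift are both controlled by `ε`. -/
structure IsEulerScheme (F : Euc m → Set (Euc m)) (ε : ℝ) (γ : ℕ → ℝ) (x : ℕ → Euc m) : Prop
    extends IsTimeGrid γ where
  step_le : ∀ i, γ (i + 1) ≤ ε
  exists_drift : ∀ i, ∃ f ∈ Fdelta F ε (x i), x (i + 1) = x i + γ (i + 1) • f

namespace IsEulerScheme

lemma eps_pos (h : IsEulerScheme F ε γ x) : 0 < ε := (h.pos 1).trans_le (h.step_le 0)

lemma map_sub_le (h : IsEulerScheme F ε γ x) (φ : Euc m →L[ℝ] ℝ) {κ : ℝ} {p q : ℕ} (hpq : p ≤ q)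
    (hκ : ∀ i ∈ Ico p q, ∀ f ∈ Fdelta F ε (x i), φ f ≤ κ) :
    φ (x q - x p) ≤ κ * (tauOf γ q - tauOf γ p) := by
  induction q, hpq using Nat.le_induction with
  | base => simp
  | succ q hpq ih =>
    obtain ⟨f, hf, hstep⟩ := h.exists_drift q
    have hfκ := mul_le_mul_of_nonneg_left (hκ q ⟨hpq, q.lt_succ_self⟩ f hf) (h.pos (q + 1)).le
    have := ih fun i hi => hκ i ⟨hi.1, hi.2.trans q.lt_succ_self⟩
    rw [hstep, tauOf_succ, add_sub_right_comm, map_add, map_smul, smul_eq_mul]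
    linarith

lemma dist_le_mul_sub (h : IsEulerScheme F ε γ x) {L : ℝ} {p q : ℕ} (hpq : p ≤ q)
    (hL : ∀ i ∈ Ico p q, ∀ f ∈ Fdelta F ε (x i), ‖f‖ ≤ L) :
    dist (x p) (x q) ≤ L * (tauOf γ q - tauOf γ p) := by
  have h_step : ∀ i, p ≤ i → i < q → dist (x i) (x (i + 1)) ≤ L * γ (i + 1) := fun i hp hq => by
    obtain ⟨f, hf, hstep⟩ := h.exists_drift i
    rw [hstep, dist_self_add_right, norm_smul, Real.norm_of_nonneg (h.pos _).le, mul_comm]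
    exact mul_le_mul_of_nonneg_right (hL i ⟨hp, hq⟩ f hf) (h.pos _).le
  rw [tauOf_sub_tauOf hpq, Finset.mul_sum]
  exact dist_le_Ico_sum_of_dist_le hpq fun {i} hp hq => h_step i hp hq

lemma one_add_norm_le_mul_exp (h : IsEulerScheme F ε γ x) {c : ℝ}
    (hc : ∀ y, ∀ f ∈ Fdelta F ε y, ‖f‖ ≤ c * (1 + ‖y‖)) (n : ℕ) :
    1 + ‖x n‖ ≤ (1 + ‖x 0‖) * Real.exp (c * tauOf γ n) := by
  induction n with
  | zero => simp
  | succ n ih =>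
    obtain ⟨f, hf, hstep⟩ := h.exists_drift n
    have hγ := (h.pos (n + 1)).le
    calc 1 + ‖x (n + 1)‖
        ≤ 1 + (‖x n‖ + γ (n + 1) * ‖f‖) := by
          rw [hstep]
          gcongr
          simpa [norm_smul, abs_of_nonneg hγ] using norm_add_le (x n) (γ (n + 1) • f)
      _ ≤ 1 + (‖x n‖ + γ (n + 1) * (c * (1 + ‖x n‖))) := by gcongr; exact hc _ f hf
      _ = (1 + ‖x n‖) * (c * γ (n + 1) + 1) := by ring
      _ ≤ (1 + ‖x n‖) * Real.exp (c * γ (n + 1)) := by gcongr; exact Real.add_one_le_exp _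
      _ ≤ (1 + ‖x 0‖) * Real.exp (c * tauOf γ n) * Real.exp (c * γ (n + 1)) := by gcongr
      _ = (1 + ‖x 0‖) * Real.exp (c * tauOf γ (n + 1)) := by
          rw [mul_assoc, ← Real.exp_add, ← mul_add, tauOf_succ]

end IsEulerScheme

lemma IsTimeGrid.exists_isEulerScheme (hγ : IsTimeGrid γ) (hne : ∀ y, (F y).Nonempty)
    (hγε : ∀ i, γ (i + 1) ≤ ε) {n : ℕ}
    (hx : ∀ i < n, ∃ f ∈ Fdelta F ε (x i), x (i + 1) = x i + γ (i + 1) • f) :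
    ∃ y, IsEulerScheme F ε γ y ∧ ∀ i ≤ n, y i = x i := by
  choose sel hsel using hne
  have hε : 0 < ε := (hγ.pos 1).trans_le (hγε 0)
  let y : ℕ → Euc m := fun i => i.rec (x 0)
    fun i yi => if i < n then x (i + 1) else yi + γ (i + 1) • sel yi
  have y_succ_of_ge : ∀ i, n ≤ i → y (i + 1) = y i + γ (i + 1) • sel (y i) := fun i hi =>
    if_neg (not_lt.2 hi)
  have y_eq : ∀ i ≤ n, y i = x i
    | 0, _ => rfl
    | _ + 1, hi => if_pos hi
  refine ⟨y, ⟨hγ, hγε, fun i => ?_⟩, y_eq⟩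
  rcases lt_or_ge i n with hi | hi
  · rw [y_eq i hi.le, y_eq (i + 1) hi]
    exact hx i hi
  · exact ⟨sel (y i), subset_Fdelta hε (hsel _), y_succ_of_ge i hi⟩

end EulerScheme

/-! ### Limits of Euler schemes -/

section EulerApproximation

variable {m : ℕ} {F : Euc m → Set (Euc m)} {ε : ℕ → ℝ} {γ : ℕ → ℕ → ℝ} {x : ℕ → ℕ → Euc m}
  {a : Euc m}

/-- A sequence of Euler schemes with vanishing error whose initial points converge to `a`. -/
structure IsEulerApproximation (F : Euc m → Set (Euc m)) (ε : ℕ → ℝ) (γ : ℕ → ℕ → ℝ)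
    (x : ℕ → ℕ → Euc m) (a : Euc m) : Prop where
  isEulerScheme : ∀ j, IsEulerScheme F (ε j) (γ j) (x j)
  tendsto_error : Tendsto ε atTop (𝓝 0)
  tendsto_initial : Tendsto (fun j => x j 0) atTop (𝓝 a)

/-- The limit curve of a sequence of Euler schemes, obtained without extracting subsequences as the
pointwise limit along an ultrafilter of the values at the grid point preceding `s`. -/
def eulerLimit (γ : ℕ → ℕ → ℝ) (x : ℕ → ℕ → Euc m) (s : ℝ) : Euc m :=
  limUnder (hyperfilter ℕ : Filter ℕ) fun j => x j (mIdx (γ j) s)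

namespace IsEulerApproximation

lemma exists_norm_le (h : IsEulerApproximation F ε γ x a) (hF : IsStandardSVM F) (R : ℝ) :
    ∃ D, ∀ᶠ j in atTop, ∀ i, tauOf (γ j) i ≤ R →
      ‖x j i‖ ≤ D ∧ ∀ f ∈ Fdelta F (ε j) (x j i), ‖f‖ ≤ D := by
  obtain ⟨c, hc, hgrowth⟩ := hF.exists_growth_Fdelta
  set K : ℝ := (1 + (‖a‖ + 1)) * Real.exp (c * R) with hK
  refine ⟨(1 + c) * K, ?_⟩
  filter_upwards [h.tendsto_error.eventually (ge_mem_nhds one_pos),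
    h.tendsto_initial.norm.eventually (ge_mem_nhds (lt_add_one ‖a‖))] with j hεj hxj i hi
  have hεj' : ε j ∈ Ioc 0 1 := ⟨(h.isEulerScheme j).eps_pos, hεj⟩
  have hxi : 1 + ‖x j i‖ ≤ K :=
    ((h.isEulerScheme j).one_add_norm_le_mul_exp (hgrowth _ hεj') i).trans (by rw [hK]; gcongr)
  have hcK : c * (1 + ‖x j i‖) ≤ c * K := by gcongr
  refine ⟨by nlinarith [norm_nonneg (x j i)], fun f hf => ?_⟩
  linarith [hgrowth _ hεj' _ f hf, norm_nonneg (x j i)]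

lemma exists_dist_le (h : IsEulerApproximation F ε γ x a) (hF : IsStandardSVM F) (R : ℝ) :
    ∃ L : NNReal, ∀ᶠ j in atTop, ∀ p q, tauOf (γ j) p ≤ R → tauOf (γ j) q ≤ R →
      dist (x j p) (x j q) ≤ L * dist (tauOf (γ j) p) (tauOf (γ j) q) := by
  obtain ⟨D, hD⟩ := h.exists_norm_le hF R
  refine ⟨D.toNNReal, ?_⟩
  filter_upwards [hD] with j hj p q
  wlog hpq : p ≤ q generalizing p q
  · intro hp hq
    rw [dist_comm, dist_comm (tauOf _ p)]
    exact this q p (le_of_not_ge hpq) hq hp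
  intro _ hq
  have hmono := (h.isEulerScheme j).monotone_tauOf
  rw [dist_comm (tauOf _ p), Real.dist_eq, abs_of_nonneg (sub_nonneg.2 (hmono hpq))]
  exact (h.isEulerScheme j).dist_le_mul_sub hpq fun i hi f hf =>
    ((hj i ((hmono hi.2.le).trans hq)).2 f hf).trans (Real.le_coe_toNNReal D)

lemma tendsto_tauOf_mIdx (h : IsEulerApproximation F ε γ x a) {s : ℝ} (hs : 0 ≤ s) :
    Tendsto (fun j => tauOf (γ j) (mIdx (γ j) s)) atTop (𝓝 s) := by
  refine tendsto_of_tendsto_of_tendsto_of_le_of_le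
    (by simpa using tendsto_const_nhds.sub h.tendsto_error : Tendsto (fun j => s - ε j) _ (𝓝 s))
    tendsto_const_nhds (fun j => ?_) fun j => (h.isEulerScheme j).tauOf_mIdx_le hs
  have := (h.isEulerScheme j).lt_tauOf_mIdx_succ hs
  rw [tauOf_succ] at this
  dsimp only
  linarith [(h.isEulerScheme j).step_le (mIdx (γ j) s)]

lemma tendsto_eulerLimit_mIdx (h : IsEulerApproximation F ε γ x a) (hF : IsStandardSVM F) {s : ℝ}
    (hs : 0 ≤ s) :
    Tendsto (fun j => x j (mIdx (γ j) s)) (hyperfilter ℕ) (𝓝 (eulerLimit γ x s)) := by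
  obtain ⟨D, hD⟩ := h.exists_norm_le hF s
  obtain ⟨b, -, hb⟩ := (isCompact_closedBall (0 : Euc m) D).ultrafilter_le_nhds
    ((hyperfilter ℕ).map fun j => x j (mIdx (γ j) s)) <| by
      rw [le_principal_iff, Ultrafilter.mem_coe, Ultrafilter.mem_map]
      filter_upwards [Nat.hyperfilter_le_atTop hD] with j hj
      exact mem_closedBall_zero_iff.2 (hj _ ((h.isEulerScheme j).tauOf_mIdx_le hs)).1
  exact tendsto_nhds_limUnder ⟨b, hb⟩

lemma tendsto_eulerLimit (h : IsEulerApproximation F ε γ x a) (hF : IsStandardSVM F) {l : ℕ → ℕ}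
    {u : ℝ} (hl : Tendsto (fun j => tauOf (γ j) (l j)) atTop (𝓝 u)) :
    Tendsto (fun j => x j (l j)) (hyperfilter ℕ) (𝓝 (eulerLimit γ x u)) := by
  have hu : 0 ≤ u := ge_of_tendsto' hl fun j => (h.isEulerScheme j).tauOf_nonneg _
  obtain ⟨L, hL⟩ := h.exists_dist_le hF (u + 1)
  refine (h.tendsto_eulerLimit_mIdx hF hu).congr_dist <|
    Tendsto.mono_left ?_ Nat.hyperfilter_le_atTop
  have h_times : Tendsto (fun j => L * dist (tauOf (γ j) (mIdx (γ j) u)) (tauOf (γ j) (l j)))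
      atTop (𝓝 0) := by
    simpa using ((h.tendsto_tauOf_mIdx hu).dist hl).const_mul (L : ℝ)
  refine squeeze_zero' (Eventually.of_forall fun _ => dist_nonneg) ?_ h_times
  filter_upwards [hL, hl.eventually (ge_mem_nhds (lt_add_one u))] with j hj hlj
  exact hj _ _ (((h.isEulerScheme j).tauOf_mIdx_le hu).trans (by linarith)) hlj

lemma eulerLimit_eq_of_tendsto (h : IsEulerApproximation F ε γ x a) (hF : IsStandardSVM F)
    {l : ℕ → ℕ} {u : ℝ} {b : Euc m} (hl : Tendsto (fun j => tauOf (γ j) (l j)) atTop (𝓝 u))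
    (hb : Tendsto (fun j => x j (l j)) atTop (𝓝 b)) : eulerLimit γ x u = b :=
  tendsto_nhds_unique (h.tendsto_eulerLimit hF hl) (hb.mono_left Nat.hyperfilter_le_atTop)

lemma eulerLimit_zero (h : IsEulerApproximation F ε γ x a) (hF : IsStandardSVM F) :
    eulerLimit γ x 0 = a :=
  h.eulerLimit_eq_of_tendsto hF (l := fun _ => 0) (by simp) h.tendsto_initial

lemma exists_lipschitzOnWith_eulerLimit (h : IsEulerApproximation F ε γ x a)
    (hF : IsStandardSVM F) (R : ℝ) :
    ∃ L : NNReal, LipschitzOnWith L (eulerLimit γ x) (Icc 0 R) := by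
  obtain ⟨L, hL⟩ := h.exists_dist_le hF R
  refine ⟨L, LipschitzOnWith.of_dist_le_mul fun s hs t ht => ?_⟩
  refine le_of_tendsto_of_tendsto
    ((h.tendsto_eulerLimit_mIdx hF hs.1).dist (h.tendsto_eulerLimit_mIdx hF ht.1))
    ((((h.tendsto_tauOf_mIdx hs.1).dist (h.tendsto_tauOf_mIdx ht.1)).const_mul (L : ℝ)).mono_left
      Nat.hyperfilter_le_atTop) ?_
  filter_upwards [Nat.hyperfilter_le_atTop hL] with j hj
  exact hj _ _ (((h.isEulerScheme j).tauOf_mIdx_le hs.1).trans hs.2)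
    (((h.isEulerScheme j).tauOf_mIdx_le ht.1).trans ht.2)

lemma exists_forall_mIdx_mem_ball (h : IsEulerApproximation F ε γ x a) (hF : IsStandardSVM F)
    {s ρ : ℝ} (hs : 0 ≤ s) (hρ : 0 < ρ) :
    ∃ r > 0, ∀ t ∈ Ioo s (s + r), ∀ᶠ j in (hyperfilter ℕ : Filter ℕ),
      ∀ i ∈ Ico (mIdx (γ j) s) (mIdx (γ j) t), x j i ∈ ball (eulerLimit γ x s) ρ := by
  obtain ⟨L, hL⟩ := h.exists_dist_le hF (s + 1)
  obtain ⟨r, hr, hrL⟩ : ∃ r > 0, L * (2 * r) < ρ / 2 :=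
    ⟨ρ / (4 * L + 4) / 2, by positivity, by field_simp; linarith [L.2]⟩
  refine ⟨min r 1, by positivity, fun t ht => ?_⟩
  filter_upwards [Nat.hyperfilter_le_atTop hL,
    Nat.hyperfilter_le_atTop ((h.tendsto_tauOf_mIdx hs).eventually
      (lt_mem_nhds (sub_lt_self s hr))),
    (h.tendsto_eulerLimit_mIdx hF hs).eventually (ball_mem_nhds _ (half_pos hρ))]
    with j hLj hτj hxj i hi
  have hst := min_le_left r 1
  have hst' := min_le_right r 1
  have hmono := (h.isEulerScheme j).monotone_tauOf
  have hτi : tauOf (γ j) i ≤ t := (hmono hi.2.le).trans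
    ((h.isEulerScheme j).tauOf_mIdx_le (hs.trans ht.1.le))
  have hτs := (h.isEulerScheme j).tauOf_mIdx_le hs
  have h_dist : dist (x j i) (x j (mIdx (γ j) s)) ≤ L * (2 * r) := by
    refine (hLj _ _ (by linarith [ht.2]) (by linarith)).trans ?_
    rw [Real.dist_eq, abs_of_nonneg (sub_nonneg.2 (hmono hi.1))]
    gcongr
    linarith [ht.2]
  have h_tri := dist_triangle (x j i) (x j (mIdx (γ j) s)) (eulerLimit γ x s)
  rw [mem_ball]
  linarith [mem_ball.1 hxj]

lemma eventually_map_sub_le (h : IsEulerApproximation F ε γ x a) (hF : IsStandardSVM F)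
    {s : ℝ} (hs : 0 ≤ s) (φ : Euc m →L[ℝ] ℝ) {κ : ℝ} (hκ : ∀ f ∈ F (eulerLimit γ x s), φ f < κ) :
    ∀ᶠ t in 𝓝[>] s, φ (eulerLimit γ x t - eulerLimit γ x s) ≤ κ * (t - s) := by
  obtain ⟨ρ, hρ, hφ⟩ := hF.exists_Fdelta_subset (isOpen_lt φ.continuous continuous_const) hκ
  obtain ⟨r, hr, hball⟩ := h.exists_forall_mIdx_mem_ball hF hs hρ
  filter_upwards [Ioo_mem_nhdsGT (lt_add_of_pos_right s hr)] with t ht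
  have ht0 : 0 ≤ t := hs.trans ht.1.le
  refine le_of_tendsto_of_tendsto
    ((φ.continuous.tendsto _).comp
      ((h.tendsto_eulerLimit_mIdx hF ht0).sub (h.tendsto_eulerLimit_mIdx hF hs)))
    ((((h.tendsto_tauOf_mIdx ht0).sub (h.tendsto_tauOf_mIdx hs)).const_mul κ).mono_left
      Nat.hyperfilter_le_atTop) ?_
  filter_upwards [hball t ht,
    Nat.hyperfilter_le_atTop (h.tendsto_error.eventually (ge_mem_nhds hρ))] with j hj hεj
  exact (h.isEulerScheme j).map_sub_le φ ((h.isEulerScheme j).mIdx_le_mIdx hs ht.1.le)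
    fun i hi f hf => (hφ _ (hj i hi) (Fdelta_mono (h.isEulerScheme j).eps_pos hεj hf)).le

/-- Otherwise a functional separates `d` from the compact convex set `F`, contradicting the bound
on the slopes of the limit curve in the direction of that functional. -/
lemma mem_of_hasDerivAt_eulerLimit (h : IsEulerApproximation F ε γ x a) (hF : IsStandardSVM F)
    {s : ℝ} (hs : 0 ≤ s) {d : Euc m} (hd : HasDerivAt (eulerLimit γ x) d s) :
    d ∈ F (eulerLimit γ x s) := by
  by_contra hmem
  obtain ⟨φ, κ, hφF, hφd⟩ := geometric_hahn_banach_closed_point (hF.convex _)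
    (hF.isCompact _).isClosed hmem
  have hφ_deriv : HasDerivAt (fun t => φ (eulerLimit γ x t)) (φ d) s :=
    φ.hasFDerivAt.comp_hasDerivAt s hd
  have h_slope := (hasDerivAt_iff_tendsto_slope.1 hφ_deriv).mono_left (nhdsGT_le_nhdsNE s)
  refine hφd.not_ge (le_of_tendsto h_slope ?_)
  filter_upwards [h.eventually_map_sub_le hF hs φ hφF, self_mem_nhdsWithin] with t ht hst
  rw [slope_def_field, div_le_iff₀ (sub_pos.2 hst), ← map_sub]
  exact ht

lemma isForwardSolution_eulerLimit (h : IsEulerApproximation F ε γ x a) (hF : IsStandardSVM F) :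
    IsForwardSolution F (eulerLimit γ x) where
  locallyLipschitzOn s _ := by
    obtain ⟨L, hL⟩ := h.exists_lipschitzOnWith_eulerLimit hF (s + 1)
    refine ⟨L, _, inter_mem_nhdsWithin (Ici 0) (Iic_mem_nhds (lt_add_one s)), ?_⟩
    rwa [Ici_inter_Iic]
  deriv_mem _ hs _ hd := h.mem_of_hasDerivAt_eulerLimit hF hs.le hd

end IsEulerApproximation

lemma IsStandardSVM.exists_isForwardSolution (hF : IsStandardSVM F) (a : Euc m) :
    ∃ z, IsForwardSolution F z ∧ z 0 = a := by
  have h_grid : ∀ j : ℕ, IsTimeGrid fun _ => 1 / ((j : ℝ) + 1) := fun j =>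
    IsTimeGrid.const Nat.one_div_pos_of_nat
  choose x hx hx0 using fun j => (h_grid j).exists_isEulerScheme hF.nonempty (fun _ => le_rfl)
    (x := fun _ => a) (n := 0) (by simp)
  have h : IsEulerApproximation F (fun j : ℕ => 1 / ((j : ℝ) + 1)) _ x a :=
    ⟨hx, tendsto_one_div_add_atTop_nhds_zero_nat, by simp [hx0]⟩
  exact ⟨_, h.isForwardSolution_eulerLimit hF, h.eulerLimit_zero hF⟩

lemma IsEulerApproximation.mem_PhiT (h : IsEulerApproximation F ε γ x a) (hF : IsStandardSVM F)
    {l : ℕ → ℕ} {u : ℝ} {b : Euc m} (hl : Tendsto (fun j => tauOf (γ j) (l j)) atTop (𝓝 u))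
    (hb : Tendsto (fun j => x j (l j)) atTop (𝓝 b)) : b ∈ PhiT F u a := by
  have hu : 0 ≤ u := ge_of_tendsto' hl fun j => (h.isEulerScheme j).tauOf_nonneg _
  obtain ⟨w, hw, hw0⟩ := hF.neg.exists_isForwardSolution a
  obtain ⟨y, hy, hyz⟩ := (h.isForwardSolution_eulerLimit hF).exists_isSolution_eqOn hw
    ((h.eulerLimit_zero hF).trans hw0.symm)
  exact ⟨y, hy, (hyz self_mem_Ici).trans (h.eulerLimit_zero hF),
    (hyz hu).trans (h.eulerLimit_eq_of_tendsto hF hl hb)⟩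

end EulerApproximation

/-! ### Accumulated noise -/

section Noise

variable {m : ℕ} {γ : ℕ → ℝ} {u : ℕ → Euc m}

/-- The noise `∑_{r=k}^{i-1} γ_{r+1} u_{r+1}` accumulated between the steps `k` and `i`. -/
def noiseSum (γ : ℕ → ℝ) (u : ℕ → Euc m) (k i : ℕ) : Euc m :=
  ∑ r ∈ Finset.Ico k i, γ (r + 1) • u (r + 1)

/-- The noise accumulated since step `k` stays below `δ` up to time `τ_k + T`. -/
def NoiseLE (γ : ℕ → ℝ) (u : ℕ → Euc m) (T δ : ℝ) (k : ℕ) : Prop :=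
  ∀ i ≥ k, tauOf γ i ≤ tauOf γ k + T → ‖noiseSum γ u k i‖ ≤ δ

@[simp] lemma noiseSum_self (k : ℕ) : noiseSum γ u k k = 0 := by simp [noiseSum]

lemma noiseSum_succ {k i : ℕ} (h : k ≤ i) :
    noiseSum γ u k (i + 1) = noiseSum γ u k i + γ (i + 1) • u (i + 1) :=
  Finset.sum_Ico_succ_top h _

lemma NoiseLE.mono {T T' δ δ' : ℝ} {k : ℕ} (h : NoiseLE γ u T δ k) (hT : T' ≤ T) (hδ : δ ≤ δ') :
    NoiseLE γ u T' δ' k := fun i hi hτ => (h i hi (by linarith)).trans hδ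

lemma IsTimeGrid.norm_noiseSum_le (hγ : IsTimeGrid γ) {C : ℝ} (hC : ∀ n, ‖u n‖ ≤ C) {k i : ℕ}
    (hki : k ≤ i) : ‖noiseSum γ u k i‖ ≤ C * (tauOf γ i - tauOf γ k) := by
  rw [tauOf_sub_tauOf hki, Finset.mul_sum]
  refine norm_sum_le_of_le _ fun r _ => ?_
  rw [norm_smul, Real.norm_of_nonneg (hγ.pos _).le, mul_comm]
  exact mul_le_mul_of_nonneg_right (hC _) (hγ.pos _).le

lemma IsTimeGrid.noiseLE (hγ : IsTimeGrid γ) {C T : ℝ} (hC : ∀ n, ‖u n‖ ≤ C) (k : ℕ) :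
    NoiseLE γ u T (C * T) k := fun i hki hi => by
  refine (hγ.norm_noiseSum_le hC hki).trans ?_
  have hC0 : 0 ≤ C := (norm_nonneg _).trans (hC 0)
  gcongr
  linarith

lemma sum_Ico_eq_tauOf {n k : ℕ} (h : n ≤ k) :
    ∑ i ∈ Finset.Ico n k, γ i = tauOf γ k - tauOf γ n + γ n - γ k := by
  rw [tauOf_sub_tauOf h, add_sub_assoc, ← neg_sub (γ k), ← Finset.sum_Ico_sub γ h, ← sub_eq_add_neg,
    ← Finset.sum_sub_distrib]
  exact Finset.sum_congr rfl fun i _ => by ring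

lemma IsTimeGrid.noiseLE_of_iSup_DeltaNT_lt {Ω : Type*} {U : ℕ → Ω → Euc m} {ω : Ω}
    (hγ : IsTimeGrid γ) {C T ε : ℝ} (hC : ∀ n, ‖U n ω‖ ≤ C) (hT : 0 ≤ T) {n k : ℕ}
    (h : ⨆ k : Ici n, DeltaNT γ U T k ω < ε) (hk : n ≤ k) : NoiseLE γ (U · ω) T ε k := by
  have hCT : 0 ≤ C * T := mul_nonneg ((norm_nonneg _).trans (hC 0)) hT
  have hτT (k : ℕ) : 0 ≤ tauOf γ k + T := add_nonneg (hγ.tauOf_nonneg k) hT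
  have h_le (k : ℕ) (i : {i // k < i ∧ i ≤ mIdx γ (tauOf γ k + T)}) :
      ‖noiseSum γ (U · ω) k i‖ ≤ C * T :=
    hγ.noiseLE hC k i i.2.1.le ((hγ.le_mIdx_iff (hτT k)).1 i.2.2)
  have h_bdd : BddAbove (range fun k : Ici n => DeltaNT γ U T k ω) :=
    ⟨C * T, forall_mem_range.2 fun k => Real.iSup_le (h_le k) hCT⟩
  have h_nonneg : 0 ≤ ⨆ k : Ici n, DeltaNT γ U T k ω :=
    Real.iSup_nonneg fun _ => Real.iSup_nonneg fun _ => norm_nonneg _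
  intro i hki hi
  rcases hki.eq_or_lt with rfl | hlt
  · simpa using h_nonneg.trans h.le
  · calc ‖noiseSum γ (U · ω) k i‖ ≤ DeltaNT γ U T k ω :=
          le_ciSup ⟨C * T, forall_mem_range.2 (h_le k)⟩ ⟨i, hlt, (hγ.le_mIdx_iff (hτT k)).2 hi⟩
      _ ≤ ⨆ k : Ici n, DeltaNT γ U T k ω := le_ciSup h_bdd ⟨k, hk⟩
      _ ≤ ε := h.le

/-- The windows of condition (iii) are cut by `∑ γ_i` rather than `∑ γ_{i+1}`; the discrepancy is
at most one once the steps are, hence `T + 1`. -/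
lemma IsTimeGrid.eventually_noiseLE_of_tendsto (hγ : IsTimeGrid γ) (hγ0 : Tendsto γ atTop (𝓝 0))
    {C T η : ℝ} (hC : ∀ n, ‖u n‖ ≤ C) (hη : 0 < η)
    (h : Tendsto (fun n => ⨆ k : {k : ℕ // ∑ i ∈ Finset.Ico n k, γ i ≤ T + 1},
      ‖noiseSum γ u n k‖) atTop (𝓝 0)) :
    ∀ᶠ k in atTop, NoiseLE γ u T η k := by
  have hC0 : 0 ≤ C := (norm_nonneg _).trans (hC 0)
  obtain ⟨G, hG⟩ := hγ0.bddAbove_range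
  have hG (n : ℕ) : γ n ≤ G := hG ⟨n, rfl⟩
  have h_bdd (n : ℕ) : BddAbove (range fun k : {k : ℕ // ∑ i ∈ Finset.Ico n k, γ i ≤ T + 1} =>
      ‖noiseSum γ u n k‖) := by
    refine ⟨C * (|T + 1| + G), forall_mem_range.2 fun ⟨k, hk⟩ => ?_⟩
    rcases le_total n k with hnk | hkn
    · refine (hγ.norm_noiseSum_le hC hnk).trans (mul_le_mul_of_nonneg_left ?_ hC0)
      rw [sum_Ico_eq_tauOf hnk] at hk
      linarith [hγ.pos n, hG k, le_abs_self (T + 1)]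
    · have hG0 : 0 ≤ G := (hγ.pos 0).le.trans (hG 0)
      simpa [noiseSum, hkn] using by positivity
  filter_upwards [h.eventually (gt_mem_nhds hη), hγ0.eventually (gt_mem_nhds one_pos)]
    with k hkη hk1 i hki hi
  refine (le_ciSup (h_bdd k) ⟨i, ?_⟩).trans hkη.le
  rw [sum_Ico_eq_tauOf hki]
  linarith [hγ.pos i]

lemma measurable_iSup_DeltaNT {Ω : Type*} [MeasurableSpace Ω] {U : ℕ → Ω → Euc m}
    (hU : ∀ n, Measurable (U n)) (T : ℝ) (n : ℕ) :
    Measurable fun ω => ⨆ k : Ici n, DeltaNT γ U T k ω :=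
  .iSup fun _ => .iSup fun _ =>
    (Finset.measurable_sum _ fun r _ => (hU (r + 1)).const_smul (γ (r + 1))).norm

end Noise

/-! ### Generalised stochastic approximation processes -/

lemma mem_closure_of_tendsto_of_mem_thickening {α ι : Type*} [PseudoMetricSpace α] {l : Filter ι}
    [l.NeBot] {u : ι → α} {a : α} {δ : ι → ℝ} {S : Set α} (hu : Tendsto u l (𝓝 a))
    (hδ : Tendsto δ l (𝓝 0)) (h : ∀ i, u i ∈ thickening (δ i) S) : a ∈ closure S := by
  choose s hs hus using fun i => mem_thickening_iff.1 (h i)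
  exact mem_closure_of_tendsto
    (hu.congr_dist (squeeze_zero (fun _ => dist_nonneg) (fun i => (hus i).le) hδ))
    (Eventually.of_forall hs)

namespace IsGSAP

variable {m : ℕ} {Ω : Type*} [MeasurableSpace Ω] {μ : Measure Ω} {F : Euc m → Set (Euc m)}
  {M : Set (Euc m)} {γ : ℕ → ℝ} {Fn : ℕ → Euc m → Set (Euc m)} {U x : ℕ → Ω → Euc m}

lemma isTimeGrid (h : IsGSAP μ F M γ Fn U x) : IsTimeGrid γ := ⟨h.1, h.2.1⟩

lemma tendsto_step (h : IsGSAP μ F M γ Fn U x) : Tendsto γ atTop (𝓝 0) := h.2.2.1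

lemma eventually_step_le (h : IsGSAP μ F M γ Fn U x) {δ : ℝ} (hδ : 0 < δ) :
    ∀ᶠ n in atTop, ∀ i ≥ n, γ (i + 1) ≤ δ :=
  eventually_forall_ge_atTop.2 <|
    ((tendsto_add_atTop_iff_nat 1).2 h.tendsto_step).eventually (ge_mem_nhds hδ)

lemma exists_norm_noise_le (h : IsGSAP μ F M γ Fn U x) : ∃ C, ∀ n ω, ‖U n ω‖ ≤ C := h.2.2.2.1

lemma apply_mem (h : IsGSAP μ F M γ Fn U x) (n : ℕ) (ω : Ω) : x n ω ∈ M :=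
  h.2.2.2.2.2.2.1 n ω

lemma eventually_exists_drift (h : IsGSAP μ F M γ Fn U x) {δ : ℝ} (hδ : 0 < δ) :
    ∀ᶠ n in atTop, ∀ ω, ∃ f ∈ Fdelta F δ (x n ω),
      x (n + 1) ω = x n ω + γ (n + 1) • (f + U (n + 1) ω) := by
  obtain ⟨-, -, -, -, h_step, -, -, h_Fn⟩ := h
  filter_upwards [eventually_atTop.2 (h_Fn δ hδ)] with n hn ω
  obtain ⟨f, hf, hfx⟩ := mem_smul_set.1 (h_step n ω)
  exact ⟨f, hn ω hf, by rw [smul_add, hfx]; abel⟩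

lemma ae_eventually_noiseLE (h : IsGSAP μ F M γ Fn U x) :
    ∀ᵐ ω ∂μ, ∀ T η : ℝ, 0 < η → ∀ᶠ k in atTop, NoiseLE γ (U · ω) T η k := by
  obtain ⟨C, hC⟩ := h.exists_norm_noise_le
  have h_ae := ae_all_iff.2 fun N : ℕ => h.2.2.2.2.2.1 (N + 1) (by positivity)
  filter_upwards [h_ae] with ω hω T η hη
  obtain ⟨N, hN⟩ := exists_nat_ge T
  filter_upwards [h.isTimeGrid.eventually_noiseLE_of_tendsto h.tendsto_step (fun n => hC n ω) hη
    (hω N)] with k hk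
  exact hk.mono hN le_rfl

lemma eventually_norm_sub_lt (h : IsGSAP μ F M γ Fn U x) (hF : IsStandardSVM F) (hM : IsCompact M)
    {η : ℝ} (hη : 0 < η) : ∀ᶠ n in atTop, ∀ ω, ‖x (n + 1) ω - x n ω‖ < η := by
  obtain ⟨C, hC⟩ := h.exists_norm_noise_le
  obtain ⟨B, hB⟩ := hM.isBounded.exists_norm_le
  obtain ⟨c, hc, hgrowth⟩ := hF.exists_growth_Fdelta
  have h_small : Tendsto (fun n => γ (n + 1) * (c * (1 + B) + C)) atTop (𝓝 0) := by
    simpa using ((tendsto_add_atTop_iff_nat 1).2 h.tendsto_step).mul_const (c * (1 + B) + C)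
  filter_upwards [h.eventually_exists_drift one_pos, h_small.eventually (gt_mem_nhds hη)]
    with n h_drift hn ω
  obtain ⟨f, hf, hfx⟩ := h_drift ω
  refine lt_of_le_of_lt ?_ hn
  have hγ := (h.isTimeGrid.pos (n + 1)).le
  rw [hfx, add_sub_cancel_left, norm_smul, Real.norm_of_nonneg hγ]
  gcongr
  calc ‖f + U (n + 1) ω‖ ≤ ‖f‖ + ‖U (n + 1) ω‖ := norm_add_le _ _
    _ ≤ c * (1 + ‖x n ω‖) + C := add_le_add (hgrowth 1 (by simp) _ f hf) (hC _ _)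
    _ ≤ c * (1 + B) + C := by gcongr; exact hB _ (h.apply_mem n ω)

lemma eventually_dist_interpolation_lt (h : IsGSAP μ F M γ Fn U x) (hF : IsStandardSVM F)
    (hM : IsCompact M) {X : ℝ → Ω → Euc m}
    (hX : ∀ (n : ℕ) (s : ℝ), 0 ≤ s → s ≤ γ (n + 1) → ∀ ω,
      X (tauOf γ n + s) ω = x n ω + (s / γ (n + 1)) • (x (n + 1) ω - x n ω))
    {η : ℝ} (hη : 0 < η) : ∀ᶠ s in atTop, ∀ ω, dist (X s ω) (x (mIdx γ s) ω) < η := by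
  filter_upwards [h.isTimeGrid.tendsto_mIdx_atTop.eventually (h.eventually_norm_sub_lt hF hM hη),
    eventually_ge_atTop 0] with s hs hs0 ω
  set n := mIdx γ s
  have h_left : 0 ≤ s - tauOf γ n := sub_nonneg.2 (h.isTimeGrid.tauOf_mIdx_le hs0)
  have h_right : s - tauOf γ n ≤ γ (n + 1) := by
    linarith [h.isTimeGrid.lt_tauOf_mIdx_succ hs0, tauOf_succ (γ := γ) n]
  have hγ := h.isTimeGrid.pos (n + 1)
  have hXs := hX n _ h_left h_right ω
  rw [add_sub_cancel] at hXs
  rw [dist_eq_norm, hXs, add_sub_cancel_left, norm_smul]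
  refine (mul_le_of_le_one_left (norm_nonneg _) ?_).trans_lt (hs ω)
  rwa [Real.norm_of_nonneg (div_nonneg h_left hγ.le), div_le_one hγ]

/-- Subtracting the accumulated noise from the process leaves an Euler scheme: the noise is then
felt only through the position at which the drift is evaluated. -/
lemma eventually_exists_isEulerScheme (h : IsGSAP μ F M γ Fn U x) (hF : IsStandardSVM F) {δ : ℝ}
    (hδ : 0 < δ) :
    ∀ᶠ k in atTop, ∀ l ≥ k, ∀ ω, (∀ i ∈ Icc k l, ‖noiseSum γ (U · ω) k i‖ ≤ δ) →
      ∃ y, IsEulerScheme F (δ + δ) (fun i => γ (k + i)) y ∧ y 0 = x k ω ∧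
        dist (y (l - k)) (x l ω) ≤ δ := by
  filter_upwards [eventually_forall_ge_atTop.2 (h.eventually_exists_drift hδ),
    h.eventually_step_le hδ] with k h_drift h_step l hkl ω h_noise
  have h_dist : ∀ i ∈ Icc k l, dist (x i ω - noiseSum γ (U · ω) k i) (x i ω) ≤ δ := fun i hi => by
    rw [dist_eq_norm, sub_sub_cancel_left, norm_neg]
    exact h_noise i hi
  obtain ⟨y, hy, hyx⟩ := (h.isTimeGrid.shift k).exists_isEulerScheme (n := l - k)
    (x := fun i => x (k + i) ω - noiseSum γ (U · ω) k (k + i)) (F := F) (ε := δ + δ) hF.nonempty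
    (fun i => (h_step (k + i) (by omega)).trans (by linarith)) fun i hi => by
      obtain ⟨f, hf, hfx⟩ := h_drift (k + i) (by omega) ω
      refine ⟨f, Fdelta_subset_Fdelta_add hδ hδ.le ?_ hf, ?_⟩
      · rw [dist_comm]
        exact h_dist _ ⟨by omega, by omega⟩
      · rw [← add_assoc k, hfx, noiseSum_succ (by omega), smul_add]
        abel
  refine ⟨y, hy, by simp [hyx 0 (Nat.zero_le _)], ?_⟩
  rw [hyx _ le_rfl, Nat.add_sub_cancel' hkl]
  exact h_dist l ⟨hkl, le_rfl⟩

/-- The process shadows the flow: otherwise, by compactness of `M` and of the time interval, a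
sequence of violations would converge to a solution from `S` that avoids `O`. -/
lemma exists_eventually_mem_of_PhiT_subset (h : IsGSAP μ F M γ Fn U x) (hF : IsStandardSVM F)
    (hM : IsCompact M) {S O : Set (Euc m)} (hS : IsClosed S) (hO : IsOpen O) {T₁ T₂ : ℝ}
    (h_flow : ∀ a ∈ S, ∀ t ∈ Icc T₁ T₂, PhiT F t a ∩ M ⊆ O) :
    ∃ ε > 0, ∀ᶠ k in atTop, ∀ l ≥ k, ∀ ω, tauOf γ l - tauOf γ k ∈ Icc T₁ T₂ →
      NoiseLE γ (U · ω) T₂ ε k → x k ω ∈ thickening ε S → x l ω ∈ O := by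
  by_contra! h_contra
  have hδ (j : ℕ) : 0 < 1 / ((j : ℝ) + 1) := Nat.one_div_pos_of_nat
  choose k h_fail h_scheme using fun j =>
    ((h_contra _ (hδ j)).and_eventually (h.eventually_exists_isEulerScheme hF (hδ j))).exists
  choose l hkl ω hτ h_noise hxk hxl using h_fail
  choose y hy hy0 hyl using fun j => h_scheme j (l j) (hkl j) (ω j) fun i hi =>
    h_noise j i hi.1 (by linarith [h.isTimeGrid.monotone_tauOf hi.2, (hτ j).2])
  obtain ⟨⟨a, b, t⟩, ⟨-, hbM, ht⟩, φ, hφ, h_lim⟩ :=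
    (hM.prod (hM.prod isCompact_Icc)).tendsto_subseq
      (x := fun j => (x (k j) (ω j), x (l j) (ω j), tauOf γ (l j) - tauOf γ (k j)))
      fun j => ⟨h.apply_mem _ _, h.apply_mem _ _, hτ j⟩
  obtain ⟨ha, hbt⟩ := (Prod.tendsto_iff _ _).1 h_lim
  obtain ⟨hb, ht_lim⟩ := (Prod.tendsto_iff _ _).1 hbt
  have hδ_lim : Tendsto (fun j => 1 / ((φ j : ℝ) + 1)) atTop (𝓝 0) :=
    tendsto_one_div_add_atTop_nhds_zero_nat.comp hφ.tendsto_atTop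
  have haS : a ∈ S :=
    hS.closure_eq ▸ mem_closure_of_tendsto_of_mem_thickening ha hδ_lim fun j => hxk (φ j)
  have h_approx : IsEulerApproximation F (fun j => 1 / ((φ j : ℝ) + 1) + 1 / ((φ j : ℝ) + 1))
      (fun j i => γ (k (φ j) + i)) (y ∘ φ) a :=
    ⟨fun j => hy (φ j), by simpa using hδ_lim.add hδ_lim, ha.congr fun j => (hy0 (φ j)).symm⟩
  have hb_flow : b ∈ PhiT F t a := by
    refine h_approx.mem_PhiT hF (l := fun j => l (φ j) - k (φ j)) (ht_lim.congr fun j => ?_)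
      (hb.congr_dist (squeeze_zero (fun _ => dist_nonneg) (fun j => ?_) hδ_lim))
    · simp [tauOf_shift, Nat.add_sub_cancel' (hkl (φ j))]
    · rw [dist_comm]
      exact hyl (φ j)
  obtain ⟨j, hj⟩ := (hb.eventually (hO.mem_nhds (h_flow a haS t ht ⟨hb_flow, hbM⟩))).exists
  exact hxl (φ j) hj

end IsGSAP

/-! ### Trapping near an attractor -/

section Trapping

variable {γ : ℕ → ℝ} {T : ℝ} {q : ℕ}

lemma IsTimeGrid.exists_tauOf_sub_mem_Icc (hγ : IsTimeGrid γ) (h_step : ∀ i ≥ q, γ (i + 1) ≤ T)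
    {l : ℕ} (hl : tauOf γ q + T ≤ tauOf γ l) :
    ∃ k ∈ Icc q l, tauOf γ l - tauOf γ k ∈ Icc T (2 * T) := by
  have hT : 0 ≤ T := (hγ.pos _).le.trans (h_step q le_rfl)
  have hs : tauOf γ q ≤ tauOf γ l - T := by linarith
  have hs0 : 0 ≤ tauOf γ l - T := (hγ.tauOf_nonneg q).trans hs
  have hqk : q ≤ mIdx γ (tauOf γ l - T) := (hγ.le_mIdx_iff hs0).2 hs
  have h_le := hγ.tauOf_mIdx_le hs0
  have h_lt := hγ.lt_tauOf_mIdx_succ hs0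
  rw [tauOf_succ] at h_lt
  refine ⟨_, ⟨hqk, hγ.strictMono_tauOf.le_iff_le.1 (by linarith)⟩, by linarith, ?_⟩
  linarith [h_step _ hqk]

lemma IsTimeGrid.exists_tauOf_sub_mem_Icc_add (hγ : IsTimeGrid γ) {δ : ℝ}
    (h_step : ∀ i ≥ q, γ (i + 1) ≤ δ) (hT : 0 ≤ T) :
    ∃ l ≥ q, tauOf γ l - tauOf γ q ∈ Icc T (T + δ) := by
  have hδ : 0 < δ := (hγ.pos _).trans_le (h_step q le_rfl)
  have hs : tauOf γ q ≤ tauOf γ q + (T + δ) := by linarith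
  have hs0 := (hγ.tauOf_nonneg q).trans hs
  have hql : q ≤ mIdx γ (tauOf γ q + (T + δ)) := (hγ.le_mIdx_iff hs0).2 hs
  have h_lt := hγ.lt_tauOf_mIdx_succ hs0
  rw [tauOf_succ] at h_lt
  exact ⟨_, hql, by linarith [h_step _ hql], by linarith [hγ.tauOf_mIdx_le hs0]⟩

/-- Every step later than `τ_q + 3T` has a predecessor by a time in `[T, 2T]`, which is still later
than `τ_q + T`, so strong induction applies. -/
lemma IsTimeGrid.forall_of_window (hγ : IsTimeGrid γ) (h_step : ∀ i ≥ q, γ (i + 1) ≤ T)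
    {P : ℕ → Prop} (hq : P q)
    (hP : ∀ k ≥ q, ∀ l ≥ k, tauOf γ l - tauOf γ k ∈ Icc T (3 * T) → P k → P l) {l : ℕ}
    (hl : tauOf γ q + T ≤ tauOf γ l) : P l := by
  have hT : 0 < T := (hγ.pos _).trans_le (h_step q le_rfl)
  induction l using Nat.strong_induction_on with
  | _ l ih =>
    rcases le_or_gt (tauOf γ l) (tauOf γ q + 3 * T) with h_near | h_far
    · have hql : q ≤ l := hγ.strictMono_tauOf.le_iff_le.1 (by linarith)
      exact hP q le_rfl l hql ⟨by linarith, by linarith⟩ hq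
    · obtain ⟨k, hk, hkT, hk2T⟩ := hγ.exists_tauOf_sub_mem_Icc h_step hl
      have hkl : k < l := hγ.strictMono_tauOf.lt_iff_lt.1 (by linarith)
      exact hP k hk.1 l hk.2 ⟨hkT, by linarith⟩ (ih k hkl (by linarith))

end Trapping

section Attractor

variable {m : ℕ} {F : Euc m → Set (Euc m)} {A M O : Set (Euc m)} {p : Euc m} {r : ℝ}

/-- The closed `r`-neighbourhood of `A` is uniformly attracted to `A` by the inclusion. -/
def IsAttractingRadius (F : Euc m → Set (Euc m)) (A : Set (Euc m)) (r : ℝ) : Prop :=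
  ∀ η > 0, ∃ T > 0, ∀ t ≥ T, ∀ a ∈ cthickening r A, PhiT F t a ⊆ thickening η A

lemma IsAttractorSV.isCompact (hA : IsAttractorSV F A) : IsCompact A := hA.2.1

lemma IsAttractorSV.exists_isAttractingRadius (hA : IsAttractorSV F A) :
    ∃ r > 0, IsAttractingRadius F A r := by
  obtain ⟨-, hA_compact, -, V, hV, hAV, h_attr⟩ := hA
  obtain ⟨r, hr, hrV⟩ := hA_compact.exists_cthickening_subset_open hV hAV
  refine ⟨r, hr, fun η hη => ?_⟩
  obtain ⟨T, hT, h⟩ := h_attr η hη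
  exact ⟨T, hT, fun t ht a ha => h t ht a (hrV ha)⟩

lemma omegaLimitSV_eq_iInter_nat (F : Euc m → Set (Euc m)) (p : Euc m) :
    omegaLimitSV F p = ⋂ n : ℕ, closure {y | ∃ s ≥ (n : ℝ), y ∈ PhiT F s p} := by
  refine Subset.antisymm (subset_iInter fun n => iInter₂_subset (n : ℝ) n.cast_nonneg) ?_
  refine subset_iInter₂ fun t _ => ?_
  obtain ⟨n, hn⟩ := exists_nat_ge t
  exact (iInter_subset _ n).trans (closure_mono fun y ⟨s, hs, hy⟩ => ⟨s, hn.trans hs, hy⟩)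

lemma exists_forall_PhiT_inter_subset_of_mem_basinSV (hM : IsCompact M) (hO : IsOpen O)
    (hAO : A ⊆ O) (hp : p ∈ basinSV F A) : ∃ T > 0, ∀ t ≥ T, PhiT F t p ∩ M ⊆ O := by
  have h_empty : (M \ O) ∩ ⋂ n : ℕ, closure {y | ∃ s ≥ (n : ℝ), y ∈ PhiT F s p} = ∅ := by
    rw [← omegaLimitSV_eq_iInter_nat, ← disjoint_iff_inter_eq_empty]
    exact disjoint_sdiff_left.mono_right (hp.trans hAO)
  have h_anti : Antitone fun n : ℕ => closure {y | ∃ s ≥ (n : ℝ), y ∈ PhiT F s p} :=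
    fun a b hab => closure_mono fun y ⟨s, hs, hy⟩ => ⟨s, (Nat.cast_le.2 hab).trans hs, hy⟩
  obtain ⟨n, hn⟩ := (hM.diff hO).elim_directed_family_closed _ (fun _ => isClosed_closure)
    h_empty (directed_of_isDirected_le h_anti)
  refine ⟨n + 1, by positivity, fun t ht b ⟨hbt, hbM⟩ => ?_⟩
  by_contra hbO
  exact hn.subset ⟨⟨hbM, hbO⟩, subset_closure ⟨t, by linarith, hbt⟩⟩

end Attractor

namespace IsGSAP

variable {m : ℕ} {Ω : Type*} [MeasurableSpace Ω] {μ : Measure Ω} {F : Euc m → Set (Euc m)}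
  {M : Set (Euc m)} {γ : ℕ → ℝ} {Fn : ℕ → Euc m → Set (Euc m)} {U x : ℕ → Ω → Euc m}
  {A O : Set (Euc m)} {p : Euc m} {r : ℝ}

lemma exists_eventually_exists_mem_of_mem_basinSV (h : IsGSAP μ F M γ Fn U x)
    (hF : IsStandardSVM F) (hM : IsCompact M) (hO : IsOpen O) (hAO : A ⊆ O)
    (hp : p ∈ basinSV F A) :
    ∃ T > 0, ∃ ε > 0, ∀ᶠ k in atTop, ∀ ω, NoiseLE γ (U · ω) T ε k → x k ω ∈ ball p ε →
      ∃ l ≥ k, x l ω ∈ O := by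
  obtain ⟨T, hT, hTO⟩ := exists_forall_PhiT_inter_subset_of_mem_basinSV hM hO hAO hp
  obtain ⟨ε, hε, h_flow⟩ := h.exists_eventually_mem_of_PhiT_subset hF hM isClosed_singleton hO
    (S := {p}) (T₁ := T) (T₂ := T + 1) fun a ha t ht => mem_singleton_iff.1 ha ▸ hTO t ht.1
  refine ⟨T + 1, by positivity, ε, hε, ?_⟩
  filter_upwards [h_flow, h.eventually_step_le one_pos] with k h_flow h_step ω h_noise hxk
  obtain ⟨l, hkl, hl⟩ := h.isTimeGrid.exists_tauOf_sub_mem_Icc_add h_step hT.le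
  exact ⟨l, hkl, h_flow l hkl ω hl h_noise (by rwa [thickening_singleton])⟩

lemma exists_eventually_mem_thickening_of_window (h : IsGSAP μ F M γ Fn U x)
    (hF : IsStandardSVM F) (hM : IsCompact M) (hr : IsAttractingRadius F A r) {η : ℝ}
    (hη : 0 < η) :
    ∃ T > 0, ∃ ε > 0, ∀ᶠ k in atTop, ∀ l ≥ k, ∀ ω, tauOf γ l - tauOf γ k ∈ Icc T (3 * T) →
      NoiseLE γ (U · ω) (3 * T) ε k → x k ω ∈ thickening r A → x l ω ∈ thickening η A := by
  obtain ⟨T, hT, h_attr⟩ := hr η hη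
  obtain ⟨ε, hε, h_flow⟩ := h.exists_eventually_mem_of_PhiT_subset hF hM isClosed_cthickening
    isOpen_thickening (S := cthickening r A) (O := thickening η A) (T₁ := T) (T₂ := 3 * T)
    fun a ha t ht => inter_subset_left.trans (h_attr t ht.1 a ha)
  refine ⟨T, hT, ε, hε, ?_⟩
  filter_upwards [h_flow] with k h_flow l hkl ω hτ h_noise hxk
  exact h_flow l hkl ω hτ h_noise
    (self_subset_thickening hε _ (thickening_subset_cthickening _ _ hxk))

lemma exists_eventually_trapped (h : IsGSAP μ F M γ Fn U x) (hF : IsStandardSVM F)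
    (hM : IsCompact M) (hr : IsAttractingRadius F A r) (hr0 : 0 < r) :
    ∃ T, ∃ ε > 0, ∀ᶠ q in atTop, ∀ ω, (∀ k ≥ q, NoiseLE γ (U · ω) T ε k) →
      ∀ k ≥ q, x k ω ∈ thickening r A → ∀ᶠ l in atTop, x l ω ∈ thickening r A := by
  obtain ⟨T, hT, ε, hε, h_window⟩ := h.exists_eventually_mem_thickening_of_window hF hM hr hr0
  refine ⟨3 * T, ε, hε, ?_⟩
  filter_upwards [eventually_forall_ge_atTop.2 h_window, h.eventually_step_le hT]
    with q h_window h_step ω h_noise k hqk hxk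
  filter_upwards [h.isTimeGrid.tendsto_tauOf.eventually_ge_atTop (tauOf γ k + T)] with l hl
  exact h.isTimeGrid.forall_of_window (fun i hi => h_step i (hqk.trans hi)) hxk
    (fun i hi j hij hτ => h_window i (hqk.trans hi) j hij ω hτ (h_noise i (hqk.trans hi))) hl

lemma eventually_mem_thickening_of_trapped (h : IsGSAP μ F M γ Fn U x) (hF : IsStandardSVM F)
    (hM : IsCompact M) (hr : IsAttractingRadius F A r) {ω : Ω}
    (h_noise : ∀ T η : ℝ, 0 < η → ∀ᶠ k in atTop, NoiseLE γ (U · ω) T η k)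
    (h_trapped : ∀ᶠ l in atTop, x l ω ∈ thickening r A) {η : ℝ} (hη : 0 < η) :
    ∀ᶠ l in atTop, x l ω ∈ thickening η A := by
  obtain ⟨T, hT, ε, hε, h_window⟩ := h.exists_eventually_mem_thickening_of_window hF hM hr hη
  obtain ⟨q, hq⟩ := eventually_atTop.1 (h_window.and ((h_noise (3 * T) ε hε).and h_trapped))
  obtain ⟨q', h_step⟩ := (h.eventually_step_le hT).exists_forall_of_atTop
  filter_upwards [h.isTimeGrid.tendsto_tauOf.eventually_ge_atTop (tauOf γ (max q q') + T)] with l hl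
  obtain ⟨k, hk, hkT, hk2T⟩ := h.isTimeGrid.exists_tauOf_sub_mem_Icc
    (fun i hi => h_step q' le_rfl i ((le_max_right q q').trans hi)) hl
  obtain ⟨hk_window, hk_noise, hxk⟩ := hq k ((le_max_left q q').trans hk.1)
  exact hk_window l hk.2 ω ⟨hkT, by linarith⟩ hk_noise hxk

/-- The noise has to be small in the fixed sense `ε, T` only to bring the path from `p` to `A` and
to trap it there; the asymptotic condition (iii) then yields convergence. -/
lemma exists_eventually_mem_thickening (h : IsGSAP μ F M γ Fn U x) (hF : IsStandardSVM F)
    (hM : IsCompact M) (hA : IsAttractorSV F A) (hp : p ∈ basinSV F A) :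
    ∃ T > 0, ∃ ε > 0, ∀ᶠ k in atTop, ∀ ω, x k ω ∈ ball p ε →
      (∀ i ≥ k, NoiseLE γ (U · ω) T ε i) →
      (∀ T η : ℝ, 0 < η → ∀ᶠ i in atTop, NoiseLE γ (U · ω) T η i) →
      ∀ η > 0, ∀ᶠ l in atTop, x l ω ∈ thickening η A := by
  obtain ⟨r, hr0, hr⟩ := hA.exists_isAttractingRadius
  obtain ⟨T₁, hT₁, ε₁, hε₁, h_enter⟩ := h.exists_eventually_exists_mem_of_mem_basinSV hF hM
    isOpen_thickening (self_subset_thickening hr0 A) hp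
  obtain ⟨T₂, ε₂, hε₂, h_trap⟩ := h.exists_eventually_trapped hF hM hr hr0
  refine ⟨max T₁ T₂, lt_max_of_lt_left hT₁, min ε₁ ε₂, lt_min hε₁ hε₂, ?_⟩
  filter_upwards [h_enter, h_trap] with k h_enter h_trap ω hxk h_noise h_vanish η hη
  obtain ⟨l, hkl, hxl⟩ := h_enter ω
    ((h_noise k le_rfl).mono (le_max_left _ _) (min_le_left _ _))
    (ball_subset_ball (min_le_left _ _) hxk)
  have h_trapped := h_trap ω
    (fun i hi => (h_noise i hi).mono (le_max_right _ _) (min_le_right _ _)) l hkl hxl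
  exact h.eventually_mem_thickening_of_trapped hF hM hr h_vanish h_trapped hη

end IsGSAP

/-! ### Limit sets and attainability -/

section LimitSet

variable {m : ℕ} {γ : ℕ → ℝ}

lemma limitSet_subset_of_forall_eventually_mem_thickening {Y : ℝ → Euc m} {A : Set (Euc m)}
    (hA : IsClosed A) (h : ∀ η > 0, ∀ᶠ s in atTop, Y s ∈ thickening η A) : limitSet Y ⊆ A := by
  intro y hy
  rw [← hA.closure_eq, closure_eq_iInter_cthickening]
  refine mem_iInter₂.2 fun η hη => ?_
  obtain ⟨t, ht⟩ := eventually_atTop.1 (h η hη)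
  refine closure_minimal ?_ isClosed_cthickening (mem_iInter₂.1 hy (max t 0) (le_max_right t 0))
  rintro _ ⟨s, hs, rfl⟩
  exact thickening_subset_cthickening _ _ (ht s ((le_max_left t 0).trans hs))

lemma IsTimeGrid.limitSet_subset (hγ : IsTimeGrid γ) {Y : ℝ → Euc m} {y : ℕ → Euc m}
    {A : Set (Euc m)} (hA : IsClosed A)
    (h_near : ∀ η > 0, ∀ᶠ s in atTop, dist (Y s) (y (mIdx γ s)) < η)
    (h : ∀ η > 0, ∀ᶠ n in atTop, y n ∈ thickening η A) : limitSet Y ⊆ A := by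
  refine limitSet_subset_of_forall_eventually_mem_thickening hA fun η hη => ?_
  filter_upwards [h_near _ (half_pos hη), hγ.tendsto_mIdx_atTop.eventually (h _ (half_pos hη))]
    with s hs hys
  obtain ⟨a, ha, hya⟩ := mem_thickening_iff.1 hys
  refine mem_thickening_iff.2 ⟨a, ha, ?_⟩
  linarith [dist_triangle (Y s) (y (mIdx γ s)) a]

lemma Attainable.exists_measure_preimage_ball_pos {Ω : Type*} [MeasurableSpace Ω] {μ : Measure Ω}
    {X : ℝ → Ω → Euc m} {x : ℕ → Ω → Euc m} {p : Euc m} (hp : Attainable μ X p)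
    (hγ : IsTimeGrid γ)
    (h_near : ∀ η > 0, ∀ᶠ s in atTop, ∀ ω, dist (X s ω) (x (mIdx γ s) ω) < η)
    {ε : ℝ} (hε : 0 < ε) (q : ℕ) : ∃ k ≥ q, 0 < μ (x k ⁻¹' ball p ε) := by
  obtain ⟨t, ht⟩ := eventually_atTop.1 <| (h_near _ (half_pos hε)).and <|
    (hγ.tendsto_mIdx_atTop.eventually_ge_atTop q).and (eventually_gt_atTop 0)
  have h_subset : {ω | ∃ s ≥ t, X s ω ∈ ball p (ε / 2)} ⊆ ⋃ k ≥ q, x k ⁻¹' ball p ε := by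
    rintro ω ⟨s, hs, hXs⟩
    obtain ⟨h_dist, hq, -⟩ := ht s hs
    refine mem_iUnion₂.2 ⟨mIdx γ s, hq, ?_⟩
    have := dist_triangle_left (x (mIdx γ s) ω) p (X s ω)
    rw [mem_preimage, mem_ball]
    linarith [h_dist ω, mem_ball.1 hXs]
  have h_pos := hp t (ht t le_rfl).2.2 _ (ball_mem_nhds p (half_pos hε))
  by_contra! h_null
  refine h_pos.ne' (measure_mono_null h_subset ?_)
  exact measure_iUnion_null fun k => measure_iUnion_null fun hk =>
    nonpos_iff_eq_zero.1 (h_null k hk)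

end LimitSet

lemma measure_diff_pos_of_condExp_indicator_le {Ω : Type*} {m' mΩ : MeasurableSpace Ω}
    {μ : Measure Ω} [IsFiniteMeasure μ] (hm : m' ≤ mΩ) {G E : Set Ω} (hG : MeasurableSet[m'] G)
    (hE : MeasurableSet E) {c : ℝ} (hc : c < 1)
    (h : ∀ᵐ ω ∂μ, (μ[E.indicator (fun _ => (1 : ℝ)) | m']) ω ≤ c) (hG_pos : 0 < μ G) :
    0 < μ (G \ E) := by
  have h_inter : μ.real (G ∩ E) ≤ c * μ.real G := calc
    μ.real (G ∩ E) = ∫ ω in G, E.indicator (fun _ => (1 : ℝ)) ω ∂μ := by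
      simp [setIntegral_indicator hE]
    _ = ∫ ω in G, (μ[E.indicator (fun _ => (1 : ℝ)) | m']) ω ∂μ :=
      (setIntegral_condExp hm ((integrable_const 1).indicator hE) hG).symm
    _ ≤ ∫ _ in G, c ∂μ :=
      setIntegral_mono_ae integrable_condExp.integrableOn (integrable_const c).integrableOn h
    _ = c * μ.real G := by simp [mul_comm]
  have h_lt : c * μ.real G < μ.real G :=
    mul_lt_of_lt_one_left (ENNReal.toReal_pos hG_pos.ne' (measure_ne_top μ G)) hc
  have h_split := measureReal_inter_add_sdiff (μ := μ) (s := G) hE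
  have h_diff : 0 < μ.real (G \ E) := by linarith
  exact (ENNReal.toReal_pos_iff.1 h_diff).1

/-- (Main theorem.) Let `(x_n)` be a generalised stochastic
approximation process relative to a standard `F`, whose noise satisfies condition
(bruit2). If `A` is an attractor for the induced set-valued dynamical system whose
basin contains an attainable point of the interpolated process `X`, then
`P(L(X) ⊆ A) > 0`. -/
theorem main_convergence_with_positive_probability
    {m : ℕ} {Ω : Type*} {mΩ : MeasurableSpace Ω}
    (μ : Measure Ω) [IsProbabilityMeasure μ] (𝓕 : Filtration ℕ mΩ)
    (F : Euc m → Set (Euc m)) (hF : IsStandardSVM F)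
    (M : Set (Euc m)) (hM : IsCompact M)
    (γ : ℕ → ℝ) (Fn : ℕ → Euc m → Set (Euc m))
    (U : ℕ → Ω → Euc m) (x : ℕ → Ω → Euc m)
    (hgsap : IsGSAP μ F M γ Fn U x)
    (hxadapted : Adapted 𝓕 x) (hUadapted : Adapted 𝓕 U)
    (hbruit : Bruit2 μ (fun n => 𝓕 n) γ U)
    (X : ℝ → Ω → Euc m)
    (hX : ∀ (n : ℕ) (s : ℝ), 0 ≤ s → s ≤ γ (n + 1) → ∀ ω,
      X (tauOf γ n + s) ω = x n ω + (s / γ (n + 1)) • (x (n + 1) ω - x n ω))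
    (A : Set (Euc m)) (hA : IsAttractorSV F A)
    (hatt : ∃ p, Attainable μ X p ∧ p ∈ basinSV F A) :
    0 < μ {ω | limitSet (fun t => X t ω) ⊆ A} := by
  obtain ⟨p, hp, hpA⟩ := hatt
  have hγ := hgsap.isTimeGrid
  have h_near : ∀ η > 0, ∀ᶠ s in atTop, ∀ ω, dist (X s ω) (x (mIdx γ s) ω) < η :=
    fun η hη => hgsap.eventually_dist_interpolation_lt hF hM hX hη
  obtain ⟨T, hT, ε, hε, h_conv⟩ := hgsap.exists_eventually_mem_thickening hF hM hA hpA
  obtain ⟨w, hw, h_cond⟩ := hbruit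
  obtain ⟨q, hq⟩ := eventually_atTop.1
    (h_conv.and ((hw ε hε T hT).2.eventually (gt_mem_nhds one_pos)))
  obtain ⟨k, hqk, hk_pos⟩ := hp.exists_measure_preimage_ball_pos hγ h_near hε q
  obtain ⟨hk_conv, hwk⟩ := hq k hqk
  have h_event : MeasurableSet {ω | ε ≤ ⨆ j : Ici k, DeltaNT γ U T j ω} :=
    measurableSet_le measurable_const
      (measurable_iSup_DeltaNT (fun n => (hUadapted n).mono (𝓕.le n) le_rfl) T k)
  have h_quiet_pos := measure_diff_pos_of_condExp_indicator_le (𝓕.le k)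
    (hxadapted k measurableSet_ball) h_event hwk (h_cond ε hε T hT k) hk_pos
  obtain ⟨C, hC⟩ := hgsap.exists_norm_noise_le
  refine h_quiet_pos.trans_le (measure_mono_ae ?_)
  filter_upwards [hgsap.ae_eventually_noiseLE] with ω h_vanish hω
  have h_noise : ∀ i ≥ k, NoiseLE γ (U · ω) T ε i := fun i hi =>
    hγ.noiseLE_of_iSup_DeltaNT_lt (fun n => hC n ω) hT.le (not_le.1 hω.2) hi
  exact hγ.limitSet_subset (y := (x · ω)) hA.isCompact.isClosed
    (fun η hη => (h_near η hη).mono fun _ hs => hs ω) (hk_conv ω hω.1 h_noise h_vanish)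
end
end

section
/- Let (K,d) be a compact metric space and let Λ_n, Λ : K ⇒ K be set-valued maps with nonempty values such that Fix(Λ) := {x ∈ K : x ∈ Λ(x)} is nonempty, Λ_{n+1}(x) ⊂ Λ_n(x) for every n and every x ∈ K, and whenever x_n → x in K one has limsup_n Λ_n(x_n) ⊂ Λ(x). Then for every δ > 0 there exist ε > 0 and n₀ ∈ ℕ such that for all n > n₀ and all x ∈ K: d(x, Λ_n(x)) ≤ ε implies d(x, Fix(Λ)) ≤ δ. -/
open MeasureTheory Filter Topology Metric Set Pointwise

noncomputable section

/-!
Writing `S k` for the set of `ε k`-approximate fixed points of `Λn k`, where `ε` decreases to `0`,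
monotonicity of `Λn` makes `S` a decreasing sequence. A point lying in the closure of every `S k`
is the limit of some `x k ∈ S k`, so the limsup condition forces it to be a fixed point of `Λ`.
By compactness, the closure of some `S k` is then contained in any given neighborhood of the fixed
points of `Λ`.
-/

section SetLimsup

variable {X : Type*} [PseudoEMetricSpace X] {A : ℕ → Set X} {a : X}

theorem mem_setLimsup_iff_frequently_infEDist_lt :
    a ∈ setLimsup A ↔ ∀ r > 0, ∃ᶠ n in atTop, infEDist a (A n) < r := by
  have meets_eball_iff (r : ENNReal) (n : ℕ) :
      (eball a r ∩ A n).Nonempty ↔ infEDist a (A n) < r := by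
    simp only [infEDist_lt_iff, Set.Nonempty, mem_inter_iff, mem_eball', and_comm]
  simp only [setLimsup, mem_ofPred_eq, ← Nat.frequently_atTop_iff_infinite, ← meets_eball_iff]
  refine ⟨fun h r hr => h _ (eball_mem_nhds a hr), fun h U hU => ?_⟩
  obtain ⟨r, hr, hrU⟩ := EMetric.mem_nhds_iff.1 hU
  exact (h r hr).mono fun n hn => hn.mono (inter_subset_inter_left _ hrU)

theorem mem_setLimsup_of_tendsto_infEDist {x : ℕ → X} (hx : Tendsto x atTop (𝓝 a))
    (hxA : Tendsto (fun n => infEDist (x n) (A n)) atTop (𝓝 0)) : a ∈ setLimsup A := by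
  have tendsto_zero : Tendsto (fun n => infEDist a (A n)) atTop (𝓝 0) := by
    refine tendsto_const_nhds.squeeze ?_ (fun _ => zero_le) fun n =>
      infEDist_le_edist_add_infEDist (y := x n)
    simpa only [edist_comm a, add_zero] using (tendsto_iff_edist_tendsto_0.1 hx).add hxA
  exact mem_setLimsup_iff_frequently_infEDist_lt.2 fun r hr =>
    (tendsto_zero.eventually_lt_const hr).frequently

end SetLimsup

section ApproxFixedPoints

/-- The `ε`-approximate fixed points of a set-valued map `F`: the points within distance `ε` of
their image. The distance is extended, so that a point with empty image is at distance `∞` from it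
and is approximately fixed only for `ε = ∞`. -/
def approxFixedPoints {K : Type*} [PseudoEMetricSpace K] (F : K → Set K) (ε : ENNReal) : Set K :=
  {x | infEDist x (F x) ≤ ε}

theorem approxFixedPoints_mono {K : Type*} [PseudoEMetricSpace K] {F G : K → Set K}
    {ε η : ENNReal} (hFG : ∀ x, F x ⊆ G x) (hεη : ε ≤ η) :
    approxFixedPoints F ε ⊆ approxFixedPoints G η :=
  fun x hx => (infEDist_anti (hFG x)).trans (hx.trans hεη)

theorem mem_approxFixedPoints_ofReal_iff {K : Type*} [PseudoMetricSpace K] {F : K → Set K}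
    {x : K} {ε : ℝ} (hx : (F x).Nonempty) (hε : 0 ≤ ε) :
    x ∈ approxFixedPoints F (ENNReal.ofReal ε) ↔ infDist x (F x) ≤ ε :=
  ENNReal.le_ofReal_iff_toReal_le (infEDist_ne_top hx) hε

variable {K : Type*} [PseudoEMetricSpace K] {Λn : ℕ → K → Set K} {Λ : K → Set K}

theorem iInter_closure_approxFixedPoints_subset
    (hlimsup : ∀ (x : K) (xs : ℕ → K), Tendsto xs atTop (𝓝 x) →
      setLimsup (fun n => Λn n (xs n)) ⊆ Λ x)
    {ε : ℕ → ENNReal} (hε : Tendsto ε atTop (𝓝 0)) :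
    ⋂ n, closure (approxFixedPoints (Λn n) (ε n)) ⊆ {x | x ∈ Λ x} := by
  intro a ha
  have exists_near (n : ℕ) : ∃ x ∈ approxFixedPoints (Λn n) (ε n), edist a x < (n : ENNReal)⁻¹ :=
    EMetric.mem_closure_iff.1 (mem_iInter.1 ha n) _ (ENNReal.inv_pos.2 (ENNReal.natCast_ne_top n))
  choose x hx hax using exists_near
  have x_tendsto : Tendsto x atTop (𝓝 a) := by
    refine tendsto_iff_edist_tendsto_0.2 <|
      tendsto_const_nhds.squeeze ENNReal.tendsto_inv_nat_nhds_zero (fun _ => zero_le) fun n => ?_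
    exact (edist_comm _ _).trans_le (hax n).le
  have dist_tendsto : Tendsto (fun n => infEDist (x n) (Λn n (x n))) atTop (𝓝 0) :=
    tendsto_const_nhds.squeeze hε (fun _ => zero_le) hx
  exact hlimsup a x x_tendsto (mem_setLimsup_of_tendsto_infEDist x_tendsto dist_tendsto)

theorem dist_to_fix_of_dist_to_LambdaN_general [CompactSpace K]
    (hanti : ∀ x, Antitone fun n => Λn n x)
    (hlimsup : ∀ (x : K) (xs : ℕ → K), Tendsto xs atTop (𝓝 x) →
      setLimsup (fun n => Λn n (xs n)) ⊆ Λ x)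
    {U : Set K} (hU : U ∈ 𝓝ˢ {x | x ∈ Λ x}) :
    ∃ ε > 0, ∃ n₀ : ℕ, ∀ n ≥ n₀, approxFixedPoints (Λn n) (ENNReal.ofReal ε) ⊆ U := by
  obtain ⟨ε, ε_anti, ε_pos, ε_tendsto⟩ := exists_seq_strictAnti_tendsto (0 : ℝ)
  let S (k : ℕ) : Set K := approxFixedPoints (Λn k) (ENNReal.ofReal (ε k))
  have S_anti : Antitone fun k => closure (S k) := fun k l hkl =>
    closure_mono <| approxFixedPoints_mono (fun x => hanti x hkl)
      (ENNReal.ofReal_le_ofReal (ε_anti.antitone hkl))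
  have iInter_subset_fix : ⋂ k, closure (S k) ⊆ {x | x ∈ Λ x} :=
    iInter_closure_approxFixedPoints_subset hlimsup
      (by simpa only [ENNReal.ofReal_zero] using ENNReal.tendsto_ofReal ε_tendsto)
  obtain ⟨k, hkU⟩ := exists_subset_nhds_of_compactSpace S_anti.directed_ge
    (fun _ => isClosed_closure) fun x hx => mem_nhdsSet_iff_forall.1 hU x (iInter_subset_fix hx)
  exact ⟨ε k, ε_pos k, k, fun n hn =>
    (approxFixedPoints_mono (fun x => hanti x hn) le_rfl).trans (subset_closure.trans hkU)⟩

end ApproxFixedPoints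

/-- (Lemma `distancefixgen`.) Let `(K,d)` be a compact metric space
and `Λ_n, Λ : K ⇒ K` set-valued maps with nonempty values such that `Fix(Λ) ≠ ∅`,
`Λ_{n+1}(x) ⊆ Λ_n(x)`, and `x_n → x` implies `limsup_n Λ_n(x_n) ⊆ Λ(x)`. Then for
every `δ > 0` there are `ε > 0` and `n₀` with: for `n > n₀`,
`d(x, Λ_n(x)) ≤ ε ⟹ d(x, Fix Λ) ≤ δ`. -/
theorem dist_to_fix_of_dist_to_LambdaN
    {K : Type*} [MetricSpace K] [CompactSpace K]
    (Λn : ℕ → K → Set K) (Λ : K → Set K)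
    (hΛnne : ∀ n x, (Λn n x).Nonempty) (hΛne : ∀ x, (Λ x).Nonempty)
    (hFix : {x : K | x ∈ Λ x}.Nonempty)
    (hmono : ∀ (n : ℕ) (x : K), Λn (n + 1) x ⊆ Λn n x)
    (hlimsup : ∀ (x : K) (xs : ℕ → K), Tendsto xs atTop (𝓝 x) →
      setLimsup (fun n => Λn n (xs n)) ⊆ Λ x) :
    ∀ δ > 0, ∃ ε > 0, ∃ n₀ : ℕ, ∀ n > n₀, ∀ x : K,
      Metric.infDist x (Λn n x) ≤ ε → Metric.infDist x {y : K | y ∈ Λ y} ≤ δ := by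
  intro δ hδ
  obtain ⟨ε, hε, n₀, happrox⟩ := dist_to_fix_of_dist_to_LambdaN_general
    (fun x => antitone_nat_of_succ_le fun n => hmono n x) hlimsup
    (isOpen_thickening.mem_nhdsSet.2 (self_subset_thickening hδ _))
  exact ⟨ε, hε, n₀, fun n hn x hx => ((mem_thickening_iff_infDist_lt hFix).1 <|
    happrox n hn.le <| (mem_approxFixedPoints_ofReal_iff (hΛnne n x) hε.le).2 hx).le⟩
end
end
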